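/- arXiv:1711.11481 — 7 statements merged into one kernel-verified Lean document; each statement's English description precedes it below -/
import Mathlib

section
/- Let A_1, …, A_d be Hermitian n×n complex matrices with (n−1)² < d. If A_1, …, A_d are linearly independent over ℝ, then ⋂_{j=1}^d ker A_j = {0}. (That is, when (n−1)² < d, condition (a) implies condition (b).) -/
open Matrix

/-!
Conjugating a linear relation among self-adjoint vectors conjugates its coefficients, so the real
and imaginary parts of the coefficients give real relations; hence Hermitian matrices independent
over `ℝ` are independent over `ℂ`. If they all vanish on a subspace `K` then, being Hermitian, they
also take values in `Kᗮ`, so they factor through maps `ℂⁿ ⧸ K → Kᗮ`, which form a space of complex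
dimension `(n - dim K)²`. A nonzero common kernel therefore leaves room for at most `(n - 1)²` of
them.
-/

open Module

section SelfAdjoint

variable {𝕜 V κ : Type*} [RCLike 𝕜] [AddCommGroup V] [StarAddMonoid V] [Module 𝕜 V]
  [StarModule 𝕜 V] [Module ℝ V] [IsScalarTower ℝ 𝕜 V]

theorem sum_re_smul_eq_zero_of_isSelfAdjoint {v : κ → V} (hv : ∀ j, IsSelfAdjoint (v j))
    {s : Finset κ} {c : κ → 𝕜} (hc : ∑ j ∈ s, c j • v j = 0) :
    ∑ j ∈ s, RCLike.re (c j) • v j = 0 := by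
  have hstar : ∑ j ∈ s, star (c j) • v j = 0 := by
    simpa only [star_sum, star_smul, (hv _).star_eq, star_zero] using congrArg star hc
  have hdouble : (2 : 𝕜) • ∑ j ∈ s, RCLike.re (c j) • v j = 0 :=
    calc (2 : 𝕜) • ∑ j ∈ s, RCLike.re (c j) • v j
        = ∑ j ∈ s, (c j + star (c j)) • v j := by
          rw [Finset.smul_sum]
          refine Finset.sum_congr rfl fun j _ => ?_
          rw [RCLike.star_def, RCLike.add_conj, mul_smul, RCLike.real_smul_eq_coe_smul (K := 𝕜)]
      _ = 0 := by simp only [add_smul, Finset.sum_add_distrib, hc, hstar, add_zero]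
  exact (smul_eq_zero.mp hdouble).resolve_left two_ne_zero

theorem linearIndependent_of_real_of_isSelfAdjoint {v : κ → V} (hli : LinearIndependent ℝ v)
    (hv : ∀ j, IsSelfAdjoint (v j)) : LinearIndependent 𝕜 v := by
  rw [linearIndependent_iff'] at hli ⊢
  intro s c hc j hj
  have hIc : ∑ j ∈ s, (RCLike.I * c j) • v j = 0 := by
    simp only [mul_smul, ← Finset.smul_sum, hc, smul_zero]
  have hre : RCLike.re (c j) = 0 :=
    hli s _ (sum_re_smul_eq_zero_of_isSelfAdjoint hv hc) j hj
  have him : RCLike.re (RCLike.I * c j) = 0 :=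
    hli s _ (sum_re_smul_eq_zero_of_isSelfAdjoint hv hIc) j hj
  rw [RCLike.I_mul_re, neg_eq_zero] at him
  exact RCLike.ext (by simpa using hre) (by simpa using him)

end SelfAdjoint

theorem card_le_finrank_quotient_mul_finrank {F V W κ : Type*} [Field F] [AddCommGroup V]
    [Module F V] [AddCommGroup W] [Module F W] [Fintype κ] {K : Submodule F V}
    {R : Submodule F W} [FiniteDimensional F (V ⧸ K)] [FiniteDimensional F R]
    {T : κ → V →ₗ[F] W} (hT : LinearIndependent F T) (hker : ∀ j, K ≤ (T j).ker)
    (hrange : ∀ j, (T j).range ≤ R) :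
    Fintype.card κ ≤ finrank F (V ⧸ K) * finrank F R := by
  have hmem (j : κ) (x : V ⧸ K) : K.liftQ (T j) (hker j) x ∈ R :=
    hrange j (K.range_liftQ (T j) (hker j) ▸ LinearMap.mem_range_self _ x)
  let S (j : κ) : (V ⧸ K) →ₗ[F] R := (K.liftQ (T j) (hker j)).codRestrict R (hmem j)
  let extend : ((V ⧸ K) →ₗ[F] R) →ₗ[F] V →ₗ[F] W :=
    LinearMap.lcomp F W K.mkQ ∘ₗ LinearMap.compRight F R.subtype
  have hfactor : extend ∘ S = T := rfl
  have hS : LinearIndependent F S := .of_comp extend (hfactor ▸ hT)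
  simpa only [finrank_linearMap] using hS.fintype_card_le_finrank

section Symmetric

variable {𝕜 E κ : Type*} [RCLike 𝕜] [NormedAddCommGroup E] [InnerProductSpace 𝕜 E]
  [FiniteDimensional 𝕜 E] [Fintype κ] {T : κ → E →ₗ[𝕜] E}

theorem card_le_sq_finrank_sub_finrank_iInf_ker (hT : LinearIndependent 𝕜 T)
    (hsymm : ∀ j, (T j).IsSymmetric) :
    Fintype.card κ ≤ (finrank 𝕜 E - finrank 𝕜 ↥(⨅ j, (T j).ker)) ^ 2 := by
  set K := ⨅ j, (T j).ker
  have hker (j : κ) : K ≤ (T j).ker := iInf_le _ j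
  have hrange (j : κ) : (T j).range ≤ Kᗮ := by
    rw [← (T j).range.orthogonal_orthogonal, (hsymm j).orthogonal_range]
    exact Submodule.orthogonal_le (hker j)
  have hquot : finrank 𝕜 (E ⧸ K) = finrank 𝕜 E - finrank 𝕜 K :=
    Nat.eq_sub_of_add_eq K.finrank_quotient_add_finrank
  have horth : finrank 𝕜 Kᗮ = finrank 𝕜 E - finrank 𝕜 K :=
    Nat.eq_sub_of_add_eq' K.finrank_add_finrank_orthogonal
  calc Fintype.card κ ≤ finrank 𝕜 (E ⧸ K) * finrank 𝕜 Kᗮ :=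
        card_le_finrank_quotient_mul_finrank hT hker hrange
    _ = (finrank 𝕜 E - finrank 𝕜 K) ^ 2 := by rw [hquot, horth, sq]

theorem iInf_ker_eq_bot_of_sq_lt_card (hT : LinearIndependent 𝕜 T)
    (hsymm : ∀ j, (T j).IsSymmetric) (hcard : (finrank 𝕜 E - 1) ^ 2 < Fintype.card κ) :
    ⨅ j, (T j).ker = ⊥ := by
  by_contra hne
  have hpos : 1 ≤ finrank 𝕜 ↥(⨅ j, (T j).ker) := Submodule.one_le_finrank_iff.mpr hne
  refine hcard.not_ge ((card_le_sq_finrank_sub_finrank_iInf_ker hT hsymm).trans ?_)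
  gcongr

end Symmetric

theorem condition_a_implies_condition_b_of_lt_general {𝕜 ι κ : Type*} [RCLike 𝕜] [Fintype ι]
    [Fintype κ] (h : (Fintype.card ι - 1) ^ 2 < Fintype.card κ) (A : κ → Matrix ι ι 𝕜)
    (hA : ∀ j, (A j).IsHermitian) (hli : LinearIndependent ℝ A) :
    (⋂ j, {z : ι → 𝕜 | A j *ᵥ z = 0}) = {0} := by
  classical
  have hli𝕜 : LinearIndependent 𝕜 A :=
    linearIndependent_of_real_of_isSelfAdjoint hli fun j => (hA j).isSelfAdjoint
  have hT : LinearIndependent 𝕜 fun j => (A j).toEuclideanLin :=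
    hli𝕜.map' toEuclideanLin.toLinearMap toEuclideanLin.ker
  have hbot : ⨅ j, (A j).toEuclideanLin.ker = ⊥ :=
    iInf_ker_eq_bot_of_sq_lt_card hT (fun j => isSymmetric_toEuclideanLin_iff.mpr (hA j))
      (by rwa [finrank_euclideanSpace])
  ext z
  simpa using SetLike.ext_iff.mp hbot (WithLp.toLp 2 z)

/-- If `(n-1)² < d`, then condition (a) (linear independence over `ℝ` of the Hermitian
matrices `A₁, …, A_d`) implies condition (b) (trivial intersection of the kernels). -/
theorem condition_a_implies_condition_b_of_lt
    (n d : ℕ) (h : (n - 1) ^ 2 < d)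
    (A : Fin d → Matrix (Fin n) (Fin n) ℂ)
    (hA : ∀ j, (A j).IsHermitian)
    (hli : LinearIndependent ℝ A) :
    (⋂ j, {z : Fin n → ℂ | (A j).mulVec z = 0}) = {0} :=
  condition_a_implies_condition_b_of_lt_general (by simpa only [Fintype.card_fin]) A hA hli
end

section
/- For every n ≥ 2 and every d with 1 ≤ d ≤ (n−1)², there exist Hermitian n×n complex matrices A_1, …, A_d that are linearly independent over ℝ but such that ⋂_{j=1}^d ker A_j ≠ {0}. (That is, when d ≤ (n−1)², condition (a) does not imply condition (b).) -/
open Matrix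

/-!
A complex vector space with a conjugate-linear involution is the real direct sum of its self-adjoint
part and `i` times that part, so the Hermitian `m × m` matrices have real dimension `m²`. For
`m = n - 1`, bordering `d ≤ m²` independent ones with a zero row and a zero column keeps them
Hermitian and independent, while all of them now kill the same basis vector.
-/

section SelfAdjoint

open Module

theorem finrank_real_selfAdjoint (E : Type*) [AddCommGroup E] [Module ℂ E] [StarAddMonoid E]
    [StarModule ℂ E] [FiniteDimensional ℂ E] :
    finrank ℝ (selfAdjoint E) = finrank ℂ E := by
  have : FiniteDimensional ℝ E := FiniteDimensional.complexToReal E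
  -- `imaginaryPart` maps onto the self-adjoint elements and has them as its kernel as well.
  have rank_nullity : finrank ℝ (selfAdjoint E) + finrank ℝ (selfAdjoint E) = finrank ℝ E := by
    have h := (imaginaryPart (A := E)).finrank_range_add_finrank_ker
    rwa [LinearMap.range_eq_top.mpr imaginaryPart_surjective, finrank_top, ker_imaginaryPart] at h
  have real_of_complex : finrank ℝ E = 2 * finrank ℂ E := finrank_real_of_complex E
  lia

theorem finrank_real_selfAdjoint_matrix (ι : Type*) [Fintype ι] :
    finrank ℝ (selfAdjoint (Matrix ι ι ℂ)) = Fintype.card ι ^ 2 := by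
  rw [finrank_real_selfAdjoint, finrank_matrix, finrank_self, mul_one, sq]

theorem exists_isHermitian_linearIndependent {ι : Type*} [Fintype ι] {d : ℕ}
    (hd : d ≤ Fintype.card ι ^ 2) :
    ∃ A : Fin d → Matrix ι ι ℂ, (∀ j, (A j).IsHermitian) ∧ LinearIndependent ℝ A := by
  obtain ⟨A, hA⟩ := exists_linearIndependent_of_le_finrank
    (hd.trans_eq (finrank_real_selfAdjoint_matrix ι).symm)
  exact ⟨fun j => A j, fun j => (A j).2,
    hA.map' (selfAdjoint.submodule ℝ (Matrix ι ι ℂ)).subtype (Submodule.ker_subtype _)⟩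

end SelfAdjoint

section Compression

variable {ι κ κ' l m S : Type*}

theorem linearIndependent_mul_mul {R : Type*} [Semiring R] [Semiring S] [Module R S]
    [SMulCommClass R S S] [IsScalarTower R S S] [Fintype κ] [DecidableEq κ] [Fintype κ']
    [DecidableEq κ'] [Fintype l] [Fintype m] {B : ι → Matrix κ κ' S} (hB : LinearIndependent R B)
    {L : Matrix l κ S} {L' : Matrix κ l S} {M : Matrix κ' m S} {M' : Matrix m κ' S}
    (hL : L' * L = 1) (hM : M * M' = 1) :
    LinearIndependent R fun j => L * B j * M := by
  have recover_B : (mulRightLinearMap κ R M' ∘ₗ mulLeftLinearMap m R L') ∘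
      (fun j => L * B j * M) = B := funext fun j =>
    calc L' * (L * B j * M) * M' = L' * L * B j * (M * M') := by simp only [Matrix.mul_assoc]
      _ = B j := by rw [hL, hM, Matrix.one_mul, Matrix.mul_one]
  exact .of_comp _ (recover_B.symm ▸ hB)

variable [Semiring S] [Fintype ι] [DecidableEq ι]

theorem submatrix_one_mul_conjTranspose [StarRing S] [DecidableEq κ] {f : κ → ι}
    (hf : Function.Injective f) :
    (1 : Matrix ι ι S).submatrix f id * ((1 : Matrix ι ι S).submatrix f id)ᴴ = 1 := by
  rw [conjTranspose_submatrix, conjTranspose_one, ← submatrix_mul _ _ _ _ _ Function.bijective_id,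
    Matrix.one_mul, submatrix_one f hf]

theorem submatrix_one_mulVec_single {f : κ → ι} {i : ι} (hi : ∀ k, f k ≠ i) (c : S) :
    (1 : Matrix ι ι S).submatrix f id *ᵥ Pi.single i c = 0 := by
  ext k
  simp [hi k]

end Compression

theorem exists_isHermitian_linearIndependent_mulVec_single_eq_zero {ι : Type*} [Fintype ι]
    [DecidableEq ι] (i : ι) {d : ℕ} (hd : d ≤ (Fintype.card ι - 1) ^ 2) :
    ∃ A : Fin d → Matrix ι ι ℂ, (∀ j, (A j).IsHermitian) ∧ LinearIndependent ℝ A ∧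
      ∀ j, A j *ᵥ Pi.single i 1 = 0 := by
  obtain ⟨B, hB, hB_indep⟩ := exists_isHermitian_linearIndependent (ι := {k // k ≠ i}) (d := d)
    (by simpa [Fintype.card_subtype_compl] using hd)
  -- `Pᴴ * X * P` is `X` bordered by a zero row and a zero column at index `i`.
  let P : Matrix {k // k ≠ i} ι ℂ := (1 : Matrix ι ι ℂ).submatrix Subtype.val id
  have hP : P * Pᴴ = 1 := submatrix_one_mul_conjTranspose Subtype.val_injective
  have hPi : P *ᵥ Pi.single i 1 = 0 := submatrix_one_mulVec_single (fun k => k.2) 1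
  refine ⟨fun j => Pᴴ * B j * P, fun j => isHermitian_conjTranspose_mul_mul P (hB j),
    linearIndependent_mul_mul hB_indep hP hP, fun j => ?_⟩
  rw [← mulVec_mulVec, hPi, mulVec_zero]

/-- For `n ≥ 2` and `1 ≤ d ≤ (n-1)²`, condition (a) (linear independence over `ℝ`) does not
imply condition (b) (trivial intersection of the kernels). -/
theorem condition_a_not_implies_condition_b_of_le
    (n d : ℕ) (hn : 2 ≤ n) (hd1 : 1 ≤ d) (hd2 : d ≤ (n - 1) ^ 2) :
    ∃ A : Fin d → Matrix (Fin n) (Fin n) ℂ,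
      (∀ j, (A j).IsHermitian) ∧
      LinearIndependent ℝ A ∧
      (⋂ j, {z : Fin n → ℂ | (A j).mulVec z = 0}) ≠ {0} := by
  let i : Fin n := ⟨0, by lia⟩
  obtain ⟨A, hA, hA_indep, hA_ker⟩ :=
    exists_isHermitian_linearIndependent_mulVec_single_eq_zero i (d := d)
      (by rwa [Fintype.card_fin])
  refine ⟨A, hA, hA_indep, fun h => ?_⟩
  have mem_kernels : Pi.single i 1 ∈ ⋂ j, {z : Fin n → ℂ | A j *ᵥ z = 0} :=
    Set.mem_iInter.mpr hA_ker
  rw [h, Set.mem_singleton_iff, Pi.single_eq_zero_iff] at mem_kernels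
  exact one_ne_zero mem_kernels
end

section
/- Let A_1, A_2, A_3 be the 3×3 Hermitian matrices A_1 = [[1,0,0],[0,0,0],[0,0,0]], A_2 = [[0,1,0],[1,0,0],[0,0,0]], A_3 = [[0,0,1],[0,0,0],[1,0,0]]. Then: (i) A_1, A_2, A_3 are linearly independent over ℝ; (ii) ker A_1 ∩ ker A_2 ∩ ker A_3 = {0}; and (iii) for every (λ_1, λ_2, λ_3) ∈ ℝ³ the matrix λ_1 A_1 + λ_2 A_2 + λ_3 A_3 is not invertible. (Hence conditions (a) and (b) hold but the submanifold is not Levi nondegenerate in the sense of Tumanov.) -/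
open Matrix

/-! The first rows of `A₁, A₂, A₃` are the standard basis vectors, so the first row of a linear
combination recovers its coefficients, and the first entry of `Aⱼ z` is `zⱼ`. On the other hand,
every linear combination vanishes on the lower right `2 × 2` block, and by pigeonhole each
permutation of three indices meets that block, so every term of the determinant is zero. -/

section BasisRow

variable {m n R : Type*} [DecidableEq n] {A : n → Matrix m n R} {i₀ : m}

theorem linearIndependent_of_row_eq_single {K : Type*} [Semiring K] [Semiring R] [Module K R]
    [IsScalarTower K R R] [FaithfulSMul K R] (hA : ∀ j, A j i₀ = Pi.single j 1) :
    LinearIndependent K A := by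
  let row : Matrix m n R →ₗ[K] n → R := LinearMap.proj i₀ ∘ₗ (ofLinearEquiv K).symm.toLinearMap
  have hrow : row ∘ A = fun j => Pi.single j (1 : R) := funext hA
  refine .of_comp row ?_
  rw [hrow]
  exact (Pi.linearIndependent_single_one n R).restrict_scalars' K

theorem iInter_mulVec_eq_zero_of_row_eq_single [NonAssocSemiring R] [Fintype n]
    (hA : ∀ j, A j i₀ = Pi.single j 1) :
    (⋂ j, {z : n → R | A j *ᵥ z = 0}) = {0} := by
  ext z
  simp only [Set.mem_iInter, Set.mem_ofPred_eq, Set.mem_singleton_iff]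
  refine ⟨fun hz => funext fun j => ?_, fun hz j => by rw [hz, mulVec_zero]⟩
  calc z j = (A j *ᵥ z) i₀ := by rw [mulVec, hA, single_one_dotProduct]
    _ = 0 := congrFun (hz j) i₀

end BasisRow

section ZeroBlock

variable {n R : Type*} [Fintype n] [DecidableEq n] [CommRing R] {M : Matrix n n R}

theorem det_eq_zero_of_zero_block {s t : Finset n} (hst : Fintype.card n < s.card + t.card)
    (hM : ∀ i ∈ s, ∀ j ∈ t, M i j = 0) : M.det = 0 := by
  rw [← det_transpose, det_apply]
  refine Finset.sum_eq_zero fun σ _ => ?_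
  obtain ⟨j, hj⟩ : (s.map σ.toEmbedding ∩ t).Nonempty :=
    Finset.inter_nonempty_of_card_lt_card_add_card (Finset.subset_univ _) (Finset.subset_univ _)
      (by rwa [Finset.card_map, Finset.card_univ])
  simp only [Finset.mem_inter, Finset.mem_map, Equiv.coe_toEmbedding] at hj
  obtain ⟨⟨i, hi, rfl⟩, hj⟩ := hj
  rw [Finset.prod_eq_zero (Finset.mem_univ i) (hM i hi (σ i) hj), smul_zero]

theorem det_eq_zero_of_zero_off_cross (i₀ : n) (hn : 2 < Fintype.card n)
    (hM : ∀ i ≠ i₀, ∀ j ≠ i₀, M i j = 0) : M.det = 0 := by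
  refine det_eq_zero_of_zero_block (s := Finset.univ.erase i₀) (t := Finset.univ.erase i₀) ?_
    fun i hi j hj => hM i (Finset.ne_of_mem_erase hi) j (Finset.ne_of_mem_erase hj)
  rw [Finset.card_erase_of_mem (Finset.mem_univ i₀), Finset.card_univ]
  lia

end ZeroBlock

/-- The symmetric matrix unit of an unordered pair `e = {i, j}`: `Eᵢⱼ + Eⱼᵢ` when `i ≠ j`, and
`Eᵢᵢ` (not `2 Eᵢᵢ`) when `i = j`. Beloshapka's matrices are those of the pairs containing a fixed
index. -/
def symmMatrixUnit {n : Type*} [DecidableEq n] (R : Type*) [Zero R] [One R] (e : Sym2 n) :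
    Matrix n n R :=
  of fun i j => if s(i, j) = e then 1 else 0

section SymmMatrixUnit

variable {n R : Type*} [DecidableEq n]

theorem symmMatrixUnit_mk_row [Zero R] [One R] (i j : n) :
    symmMatrixUnit R s(i, j) i = Pi.single j 1 := by
  ext k
  simp only [symmMatrixUnit, of_apply, Sym2.congr_right, Pi.single_apply]

theorem symmMatrixUnit_mk_apply_of_ne [Zero R] [One R] {i₀ i k : n} (hi : i ≠ i₀) (hk : k ≠ i₀)
    (j : n) : symmMatrixUnit R s(i₀, j) i k = 0 := by
  simp [symmMatrixUnit, hi, hk]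

theorem not_isUnit_sum_smul_symmMatrixUnit {K : Type*} [Fintype n] [CommRing R] [Nontrivial R]
    [SMulZeroClass K R] (i₀ : n) (hn : 2 < Fintype.card n) (c : n → K) :
    ¬ IsUnit (∑ j, c j • symmMatrixUnit R s(i₀, j)) := by
  have hdet : (∑ j, c j • symmMatrixUnit R s(i₀, j)).det = 0 :=
    det_eq_zero_of_zero_off_cross i₀ hn fun i hi k hk => by
      simp [Matrix.sum_apply, symmMatrixUnit_mk_apply_of_ne hi hk]
  rw [isUnit_iff_isUnit_det, hdet]
  exact not_isUnit_zero

theorem symmMatrixUnit_fin_three [Zero R] [One R] :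
    (fun j : Fin 3 => symmMatrixUnit R s(0, j)) =
      ![!![1,0,0; 0,0,0; 0,0,0], !![0,1,0; 1,0,0; 0,0,0], !![0,0,1; 0,0,0; 1,0,0]] := by
  ext j i k
  fin_cases j <;> fin_cases i <;> fin_cases k <;> simp [symmMatrixUnit]

end SymmMatrixUnit

theorem beloshapka_example_not_tumanov_general {n K R : Type*} [Fintype n] [DecidableEq n]
    [Semiring K] [CommRing R] [Nontrivial R] [Module K R] [IsScalarTower K R R]
    [FaithfulSMul K R] (i₀ : n) (hn : 2 < Fintype.card n) :
    let A : n → Matrix n n R := fun j => symmMatrixUnit R s(i₀, j)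
    LinearIndependent K A ∧
      (⋂ j, {z : n → R | A j *ᵥ z = 0}) = {0} ∧
      ∀ c : n → K, ¬ IsUnit (∑ j, c j • A j) :=
  ⟨linearIndependent_of_row_eq_single (symmMatrixUnit_mk_row i₀),
    iInter_mulVec_eq_zero_of_row_eq_single (symmMatrixUnit_mk_row i₀),
    not_isUnit_sum_smul_symmMatrixUnit i₀ hn⟩

/-- Beloshapka's example in `ℂ⁶`: three Hermitian `3 × 3` matrices satisfying conditions (a)
and (b), yet no real linear combination of them is invertible (failure of Tumanov
nondegeneracy). -/
theorem beloshapka_example_not_tumanov :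
    let A : Fin 3 → Matrix (Fin 3) (Fin 3) ℂ :=
      ![!![1,0,0; 0,0,0; 0,0,0], !![0,1,0; 1,0,0; 0,0,0], !![0,0,1; 0,0,0; 1,0,0]]
    LinearIndependent ℝ A ∧
      (⋂ j, {z : Fin 3 → ℂ | (A j).mulVec z = 0}) = {0} ∧
      ∀ lam : Fin 3 → ℝ, ¬ IsUnit (lam 0 • A 0 + lam 1 • A 1 + lam 2 • A 2) := by
  rw [← symmMatrixUnit_fin_three]
  simpa only [Fin.sum_univ_three] using
    beloshapka_example_not_tumanov_general (K := ℝ) (R := ℂ) (0 : Fin 3) (by simp)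
end

section
/- Let A_1 = [[1,0],[0,0]], A_2 = [[0,0],[0,1]], A_3 = [[0,1],[1,0]], A_4 = [[0,i],[−i,0]] (2×2 Hermitian matrices). Then A_1, A_2, A_3, A_4 are linearly independent over ℝ, yet the sesquilinear Levi map 𝓛 : ℂ²×ℂ² → ℂ⁴ given by 𝓛(z, z′) = (z̄_1 z′_1, z̄_2 z′_2, z̄_1 z′_2 + z̄_2 z′_1, i z̄_1 z′_2 − i z̄_2 z′_1) is not surjective. (In particular, linear independence of the A_j does not imply surjectivity of the sesquilinear Levi map, contrary to Lemma 4.3.26 of Baouendi–Ebenfelt–Rothschild.) -/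
open Matrix

/-!
Writing `z̄ᵀ M z' = tr (M (z' z̄ᵀ))`, a value of the Levi map is the list of pairings of one matrix
of rank at most one with the `A_j`. The list `(tr A_1, …, tr A_d)` comes from pairing with the
identity instead. If the `A_j` span all `n × n` matrices, then these pairings determine the paired
matrix, so for `n ≥ 2` the list of traces is not a value of the Levi map.
-/

theorem exists_dotProduct_mulVec_ne_trace {n R : Type*} [Fintype n] [Nontrivial n]
    [CommRing R] [Nontrivial R] (v w : n → R) :
    ∃ M : Matrix n n R, v ⬝ᵥ M *ᵥ w ≠ M.trace := by
  classical
  by_contra! h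
  have vecMulVec_eq_one : vecMulVec w v = 1 := ext_iff_trace_mul_left.2 fun M => by
    rw [mul_vecMulVec, trace_vecMulVec, dotProduct_comm, h, mul_one]
  have det_eq_one : (vecMulVec w v).det = 1 := by rw [vecMulVec_eq_one, det_one]
  exact zero_ne_one ((det_vecMulVec w v).symm.trans det_eq_one)

section SesquilinearLeviMap

variable {ι n R : Type*} [Fintype n]

/-- The sesquilinear Levi map `𝓛(z, z') = (z̄ᵀ A_j z')_j` of a family of square matrices, with
`z̄ = star z`, as a function of the pair `(z, z')`. -/
def sesquilinearLeviMap [NonUnitalNonAssocSemiring R] [Star R] (A : ι → Matrix n n R) :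
    (n → R) × (n → R) → ι → R :=
  fun p j => star p.1 ⬝ᵥ A j *ᵥ p.2

theorem trace_notMem_range_sesquilinearLeviMap [Nontrivial n] [CommRing R] [Nontrivial R] [Star R]
    {A : ι → Matrix n n R} (hA : Submodule.span R (Set.range A) = ⊤) :
    (fun j => (A j).trace) ∉ Set.range (sesquilinearLeviMap A) := by
  rintro ⟨⟨z, w⟩, hzw⟩
  let form : Matrix n n R →ₗ[R] R := dotProductBilin R R (star z) ∘ₗ (mulVecBilin R R).flip w
  have form_eq_trace : form = traceLinearMap n R R := LinearMap.ext_on_range hA (congrFun hzw)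
  obtain ⟨M, hM⟩ := exists_dotProduct_mulVec_ne_trace (star z) w
  exact hM (LinearMap.congr_fun form_eq_trace M)

end SesquilinearLeviMap

/-- Four linearly independent Hermitian `2 × 2` matrices whose sesquilinear Levi map
`𝓛(z, z') = (z̄₁z'₁, z̄₂z'₂, z̄₁z'₂ + z̄₂z'₁, i z̄₁z'₂ - i z̄₂z'₁)` is not surjective. -/
theorem sesquilinear_levi_not_surjective_example :
    let A : Fin 4 → Matrix (Fin 2) (Fin 2) ℂ :=
      ![!![1,0; 0,0], !![0,0; 0,1], !![0,1; 1,0], !![0,Complex.I; -Complex.I,0]]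
    LinearIndependent ℝ A ∧
      ¬ Function.Surjective (fun p : (Fin 2 → ℂ) × (Fin 2 → ℂ) =>
        (fun j => star p.1 ⬝ᵥ (A j).mulVec p.2 : Fin 4 → ℂ)) := by
  intro A
  have linearIndependent_A : LinearIndependent ℂ A := by
    rw [Fintype.linearIndependent_iff]
    intro g hg
    obtain ⟨⟨h00, h01⟩, h10, h11⟩ :
        (g 0 = 0 ∧ g 2 + g 3 * Complex.I = 0) ∧ g 2 + -(g 3 * Complex.I) = 0 ∧ g 1 = 0 := by
      simpa [A, Fin.sum_univ_four, ← Matrix.ext_iff, Fin.forall_fin_two] using hg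
    have h2 : g 2 = 0 := by linear_combination (h01 + h10) / 2
    have h3 : g 3 = 0 := by simpa [h2] using h01
    simp [Fin.forall_fin_succ, h00, h11, h2, h3]
  have span_A : Submodule.span ℂ (Set.range A) = ⊤ :=
    linearIndependent_A.span_eq_top_of_card_eq_finrank (by simp [Module.finrank_matrix])
  exact ⟨linearIndependent_A.restrict_scalars' ℝ,
    fun hsurj => trace_notMem_range_sesquilinearLeviMap span_A (hsurj _)⟩
end

section
/- Let A_1, …, A_d be Hermitian n×n complex matrices with d ≥ 2, and suppose A_d = λ_1 A_1 + ⋯ + λ_{d−1} A_{d−1} for some real numbers λ_1, …, λ_{d−1} (so condition (a) fails). Let f : ℂ → ℂ be an entire function with f(ℝ) ⊆ ℝ, f(0) = 0 and f′(0) ≠ 0. Then the holomorphic map F : ℂⁿ×ℂ^d → ℂⁿ×ℂ^d defined by F(z, w) = (z, w_1, …, w_{d−1}, λ_1 w_1 + ⋯ + λ_{d−1} w_{d−1} + f(w_d − λ_1 w_1 − ⋯ − λ_{d−1} w_{d−1})) satisfies F(0) = 0, has invertible differential at 0, and maps the quadric Q into Q, i.e., if Im w_j = z̄ᵀ A_j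 z for all j = 1, …, d, then the same equations hold for F(z, w). (Hence when (a) fails, the stability group of Q at 0 is infinite dimensional.) -/
open Matrix

/-!
Write the failure of condition (a) as a real relation `c` with `∑ cⱼ Aⱼ = 0`, and choose a real
vector `e` with `c ⬝ᵥ e = 1`. On `Q` the functional `φ w = ∑ cⱼ wⱼ` takes real values, because
`Im (φ w) = z̄ᵀ (∑ cⱼ Aⱼ) z = 0`. In the splitting `ker φ ⊕ ℂ e` the map `F` is the identity on the
first factor and `f` on the second: it moves a point of `Q` by the real multiple
`f (φ w) - φ w` of the real vector `e`, which leaves all the equations `Im wⱼ = z̄ᵀ Aⱼ z` untouched,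
and its differential at `0` is the identity on `ker φ` and `f′(0)` on `ℂ e`.
-/

theorem isUnit_one_add_smulRight {R M : Type*} [Ring R] [TopologicalSpace R] [AddCommGroup M]
    [TopologicalSpace M] [IsTopologicalAddGroup M] [Module R M] [ContinuousSMul R M]
    {φ : M →L[R] R} {v : M} (h : IsUnit (1 + φ v)) : IsUnit (1 + φ.smulRight v) := by
  obtain ⟨u, hu⟩ := h
  have hφ : φ v = u - 1 := by rw [hu, add_sub_cancel_left]
  refine ⟨⟨1 + φ.smulRight v, 1 - φ.smulRight ((↑u⁻¹ : R) • v), ?_, ?_⟩, rfl⟩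
  all_goals
    ext x
    simp [hφ, smul_smul, mul_sub, sub_mul, sub_smul]

section DilationAlong

variable {𝕜 E : Type*}

/-- The nonlinear dilation along `v`: it adds to `x` the multiple of `v` which, when `φ v = 1`,
changes the coordinate `φ x` into `f (φ x)`. In the splitting `ker φ ⊕ 𝕜 v` it is then `id × f`. -/
def dilationAlong [Ring 𝕜] [TopologicalSpace 𝕜] [AddCommGroup E] [TopologicalSpace E] [Module 𝕜 E]
    (φ : E →L[𝕜] 𝕜) (v : E) (f : 𝕜 → 𝕜) (x : E) : E :=
  x + (f (φ x) - φ x) • v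

theorem dilationAlong_zero [Ring 𝕜] [TopologicalSpace 𝕜] [AddCommGroup E] [TopologicalSpace E]
    [Module 𝕜 E] (φ : E →L[𝕜] 𝕜) (v : E) {f : 𝕜 → 𝕜} (hf : f 0 = 0) :
    dilationAlong φ v f 0 = 0 := by
  simp [dilationAlong, hf]

variable [NontriviallyNormedField 𝕜] [NormedAddCommGroup E] [NormedSpace 𝕜 E]
  {φ : E →L[𝕜] 𝕜} {v x : E} {f : 𝕜 → 𝕜}

theorem hasFDerivAt_dilationAlong {f' : 𝕜} (hf : HasDerivAt f f' (φ x)) :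
    HasFDerivAt (dilationAlong φ v f) (1 + φ.smulRight ((f' - 1) • v)) x := by
  have hφ : HasFDerivAt (fun y => f (φ y) - φ y) (f' • φ - φ) x :=
    (hf.comp_hasFDerivAt x φ.hasFDerivAt).sub φ.hasFDerivAt
  refine ((hasFDerivAt_id x).add (hφ.smul_const v)).congr_fderiv ?_
  ext y
  simp [smul_smul, smul_sub, sub_smul, mul_comm]

theorem isUnit_fderiv_dilationAlong (hv : φ v = 1) (hf : deriv f (φ x) ≠ 0) :
    IsUnit (fderiv 𝕜 (dilationAlong φ v f) x) := by
  have hder := (differentiableAt_of_deriv_ne_zero hf).hasDerivAt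
  rw [(hasFDerivAt_dilationAlong hder).fderiv]
  refine isUnit_one_add_smulRight ?_
  simpa [hv] using hf

end DilationAlong

section RealForm

variable {E ι : Type*}

/-- The graph `{(z, w) | Im w = q z}` of a real vector-valued function `q` over the real directions
of `ℂ^ι`. The quadric `Q` is the case `q z j = Re (z̄ᵀ Aⱼ z)`. -/
def imGraph (q : E → ι → ℝ) : Set (E × (ι → ℂ)) :=
  {p | ∀ j, (p.2 j).im = q p.1 j}

variable [Fintype ι]

/-- The complex-linear functional `(z, w) ↦ ∑ cⱼ wⱼ` attached to the coefficients `c` of a real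
linear relation. -/
noncomputable def relationForm (E : Type*) [TopologicalSpace E] [AddCommGroup E] [Module ℂ E]
    (c : ι → ℝ) : E × (ι → ℂ) →L[ℂ] ℂ :=
  (∑ j, (c j : ℂ) • ContinuousLinearMap.proj j) ∘L ContinuousLinearMap.snd ℂ E (ι → ℂ)

/-- The dilation of `E × ℂ^ι` along a real vector `e` of the second factor, with respect to the
coordinate `∑ cⱼ wⱼ`. -/
noncomputable def relationDilation [TopologicalSpace E] [AddCommGroup E] [Module ℂ E]
    (c e : ι → ℝ) (f : ℂ → ℂ) : E × (ι → ℂ) → E × (ι → ℂ) :=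
  dilationAlong (relationForm E c) (0, fun j => (e j : ℂ)) f

variable [TopologicalSpace E] [AddCommGroup E] [Module ℂ E]

theorem relationForm_apply (c : ι → ℝ) (p : E × (ι → ℂ)) :
    relationForm E c p = ∑ j, (c j : ℂ) * p.2 j := by
  simp [relationForm]

theorem relationForm_ofReal (c e : ι → ℝ) (z : E) :
    relationForm E c (z, fun j => (e j : ℂ)) = (c ⬝ᵥ e : ℝ) := by
  simp [relationForm_apply, dotProduct]

theorem relationDilation_apply (c e : ι → ℝ) (f : ℂ → ℂ) (p : E × (ι → ℂ)) :
    relationDilation c e f p =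
      (p.1, fun j => p.2 j + (f (relationForm E c p) - relationForm E c p) * e j) := by
  ext <;> simp [relationDilation, dilationAlong]

theorem im_relationForm_of_mem_imGraph {q : E → ι → ℝ} {p : E × (ι → ℂ)} (hp : p ∈ imGraph q)
    (c : ι → ℝ) : (relationForm E c p).im = c ⬝ᵥ q p.1 := by
  simp [relationForm_apply, dotProduct, show ∀ j, (p.2 j).im = q p.1 j from hp]

theorem mapsTo_relationDilation_imGraph {q : E → ι → ℝ} {c : ι → ℝ} (hq : ∀ z, c ⬝ᵥ q z = 0)
    (e : ι → ℝ) {f : ℂ → ℂ} (hf : ∀ x : ℝ, (f x).im = 0) :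
    Set.MapsTo (relationDilation c e f) (imGraph q) (imGraph q) := by
  intro p hp j
  have hreal : (relationForm E c p).im = 0 := by
    rw [im_relationForm_of_mem_imGraph hp, hq]
  have hf_real : (f (relationForm E c p)).im = 0 := by
    rw [← Complex.conj_eq_iff_im, Complex.conj_eq_iff_re] at hreal
    rw [← hreal, hf]
  rw [relationDilation_apply]
  simpa [hreal, hf_real] using hp j

end RealForm

section LastCoordinate

variable {d : ℕ}

/-- The coefficients `(-λ₁, …, -λ_d, 1)` of the relation `x_{d+1} - ∑ λᵢ xᵢ = 0`. -/
def lastRelation (lam : Fin d → ℝ) : Fin (d + 1) → ℝ :=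
  Fin.snoc (-lam) 1

theorem sum_lastRelation_smul {M : Type*} [AddCommGroup M] [Module ℝ M] (lam : Fin d → ℝ)
    (x : Fin (d + 1) → M) :
    ∑ j, lastRelation lam j • x j = x (Fin.last d) - ∑ i, lam i • x i.castSucc := by
  simp [lastRelation, Fin.sum_univ_castSucc, sub_eq_neg_add]

theorem lastRelation_dotProduct_single_last (lam : Fin d → ℝ) :
    lastRelation lam ⬝ᵥ Pi.single (Fin.last d) 1 = 1 := by
  simp [lastRelation]

theorem relationForm_lastRelation {E : Type*} [TopologicalSpace E] [AddCommGroup E] [Module ℂ E]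
    (lam : Fin d → ℝ) (p : E × (Fin (d + 1) → ℂ)) :
    relationForm E (lastRelation lam) p =
      p.2 (Fin.last d) - ∑ i, (lam i : ℂ) * p.2 i.castSucc := by
  simpa [relationForm_apply] using sum_lastRelation_smul lam p.2

theorem relationDilation_lastRelation {E : Type*} [TopologicalSpace E] [AddCommGroup E] [Module ℂ E]
    (lam : Fin d → ℝ) (f : ℂ → ℂ) (z : E) (w : Fin (d + 1) → ℂ) :
    relationDilation (lastRelation lam) (Pi.single (Fin.last d) 1) f (z, w) =
      (z, fun j => if j = Fin.last d then
            (∑ i : Fin d, (lam i : ℂ) * w i.castSucc) +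
              f (w (Fin.last d) - ∑ i : Fin d, (lam i : ℂ) * w i.castSucc)
          else w j) := by
  refine (relationDilation_apply _ _ _ _).trans (Prod.ext rfl (funext fun j => ?_))
  rw [relationForm_lastRelation]
  by_cases hj : j = Fin.last d
  · subst hj
    simp only [Pi.single_eq_same, Complex.ofReal_one, mul_one, if_true]
    ring
  · simp [hj]

end LastCoordinate

theorem dotProduct_re_dotProduct_mulVec {n ι : Type*} [Fintype n] [Fintype ι] (c : ι → ℝ)
    (A : ι → Matrix n n ℂ) (x y : n → ℂ) :
    (c ⬝ᵥ fun j => (x ⬝ᵥ A j *ᵥ y).re) = (x ⬝ᵥ (∑ j, c j • A j) *ᵥ y).re := by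
  change ∑ j, c j * (x ⬝ᵥ A j *ᵥ y).re = _
  simp only [sum_mulVec, smul_mulVec, dotProduct_sum, dotProduct_smul, Complex.re_sum,
    Complex.smul_re, smul_eq_mul]

theorem lastRelation_dotProduct_re_dotProduct_mulVec {n : Type*} [Fintype n] {d : ℕ}
    {lam : Fin d → ℝ} {A : Fin (d + 1) → Matrix n n ℂ}
    (hdep : A (Fin.last d) = ∑ i, lam i • A i.castSucc) (x y : n → ℂ) :
    (lastRelation lam ⬝ᵥ fun j => (x ⬝ᵥ A j *ᵥ y).re) = 0 := by
  rw [dotProduct_re_dotProduct_mulVec, sum_lastRelation_smul, hdep, sub_self, zero_mulVec,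
    dotProduct_zero, Complex.zero_re]

theorem stability_group_infinite_when_a_fails_general {E ι : Type*} [NormedAddCommGroup E]
    [NormedSpace ℂ E] [Fintype ι] {q : E → ι → ℝ} {c e : ι → ℝ} (hq : ∀ z, c ⬝ᵥ q z = 0)
    (hce : c ⬝ᵥ e = 1) {f : ℂ → ℂ} (hfr : ∀ x : ℝ, (f x).im = 0) (hf0 : f 0 = 0)
    (hf'0 : deriv f 0 ≠ 0) :
    relationDilation c e f (0 : E × (ι → ℂ)) = 0 ∧
      IsUnit (fderiv ℂ (relationDilation c e f) (0 : E × (ι → ℂ))) ∧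
        Set.MapsTo (relationDilation c e f) (imGraph q) (imGraph q) := by
  refine ⟨dilationAlong_zero _ _ hf0, isUnit_fderiv_dilationAlong ?_ ?_,
    mapsTo_relationDilation_imGraph hq e hfr⟩
  · rw [relationForm_ofReal, hce, Complex.ofReal_one]
  · rwa [map_zero]

/-- If condition (a) fails for the Hermitian matrices `A₁, …, A_{d+1}` (the last one is a real
linear combination of the others, `d + 1 ≥ 2`), then for any entire `f` preserving `ℝ` with
`f(0) = 0`, `f'(0) ≠ 0`, the map
`F(z, w) = (z, w₁, …, w_d, ∑ λᵢ wᵢ + f(w_{d+1} - ∑ λᵢ wᵢ))` fixes `0`, has invertible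
differential at `0`, and maps the quadric `Q = {Im wⱼ = z̄ᵀAⱼz}` into itself. -/
theorem stability_group_infinite_when_a_fails
    (n d : ℕ) (hd : 1 ≤ d)
    (A : Fin (d + 1) → Matrix (Fin n) (Fin n) ℂ)
    (hA : ∀ j, (A j).IsHermitian)
    (lam : Fin d → ℝ)
    (hdep : A (Fin.last d) = ∑ i : Fin d, lam i • A i.castSucc)
    (f : ℂ → ℂ) (hf : Differentiable ℂ f) (hfr : ∀ x : ℝ, (f x).im = 0)
    (hf0 : f 0 = 0) (hf'0 : deriv f 0 ≠ 0)
    (F : (Fin n → ℂ) × (Fin (d + 1) → ℂ) → (Fin n → ℂ) × (Fin (d + 1) → ℂ))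
    (hF : ∀ z w, F (z, w) =
      (z, fun j => if j = Fin.last d then
            (∑ i : Fin d, (lam i : ℂ) * w i.castSucc) +
              f (w (Fin.last d) - ∑ i : Fin d, (lam i : ℂ) * w i.castSucc)
          else w j)) :
    F 0 = 0 ∧ IsUnit (fderiv ℂ F 0) ∧
      ∀ (z : Fin n → ℂ) (w : Fin (d + 1) → ℂ),
        (∀ j, (w j).im = (star z ⬝ᵥ (A j).mulVec z).re) →
        ∀ j, ((F (z, w)).2 j).im =
          (star (F (z, w)).1 ⬝ᵥ (A j).mulVec (F (z, w)).1).re := by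
  obtain rfl : F = relationDilation (lastRelation lam) (Pi.single (Fin.last d) 1) f :=
    funext fun ⟨z, w⟩ => (hF z w).trans (relationDilation_lastRelation lam f z w).symm
  obtain ⟨hzero, hunit, hmaps⟩ := stability_group_infinite_when_a_fails_general
    (fun z => lastRelation_dotProduct_re_dotProduct_mulVec hdep (star z) z)
    (lastRelation_dotProduct_single_last lam) hfr hf0 hf'0
  exact ⟨hzero, hunit, fun z w hw => hmaps (x := (z, w)) hw⟩
end

section
/- Let A_1, …, A_d be Hermitian n×n complex matrices with ⋂_{j=1}^d ker A_j = {0} (condition (b)), and let Q = {(z, w) ∈ ℂⁿ×ℂ^d : Im w_j = z̄ᵀ A_j z for j = 1, …, d}. Let a : U → ℂⁿ and b : U → ℂ^d be holomorphic on an open connected neighborhood U of 0 in ℂⁿ×ℂ^d, and suppose the holomorphic vector field X = Σ_i a_i ∂/∂z_i + Σ_j b_j ∂/∂w_j is tangent to Q, i.e., for every (z, w) ∈ Q ∩ U and every j = 1, …, d one has b_j(z, w)/(2i) − z̄ᵀ A_j a(z, w) = 0. Then a and b vanish identically on U. (In particular, condition (b) implies that Q is holomorphically nondegenerate at 0.)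 -/
open Matrix

/-!
Write `z̄` as a variable `ζ` of its own. The points `((z, w), z̄)` with `(z, w) ∈ Q` form a totally
real submanifold of half the real dimension of the `((z, w), ζ)`-space: after the shear
`w ↦ w - i ζᵀAz` it becomes the fixed set of the antilinear involution
`((z, u), ζ) ↦ ((ζ̄, ū), z̄)`. A holomorphic function vanishing on it vanishes identically, so the
tangency equations `bⱼ / (2i) - z̄ᵀAⱼa = 0` on `Q` imply `bⱼ / (2i) - ζᵀAⱼa = 0` for independent
`(z, w)` and `ζ`. Varying `ζ` alone gives `bⱼ = 0` and `Aⱼa = 0` for all `j`, hence `a = 0` by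
condition (b).
-/

section IdentityPrinciples

open Filter Topology Metric

variable {E F : Type*} [NormedAddCommGroup E] [NormedSpace ℂ E]
  [NormedAddCommGroup F] [NormedSpace ℂ F]

lemma frequently_nhdsNE_zero_of_eventually_ofReal {P : ℂ → Prop}
    (h : ∀ᶠ s : ℝ in 𝓝 0, P s) : ∃ᶠ t in 𝓝[≠] (0 : ℂ), P t := by
  have hofReal : Tendsto Complex.ofReal (𝓝[≠] 0) (𝓝[≠] 0) :=
    Complex.continuous_ofReal.continuousWithinAt.tendsto_nhdsWithin
      fun _ hs ↦ Complex.ofReal_ne_zero.2 hs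
  exact hofReal.frequently (h.filter_mono nhdsWithin_le_nhds).frequently

lemma eq_zero_of_frequently_eq_zero_on_complex_line [CompleteSpace F] {f : E → F} {B : Set E}
    (hf : DifferentiableOn ℂ f B) (hBo : IsOpen B) (hBc : Convex ℝ B) {v w : E} (hv : v ∈ B)
    (h : ∃ᶠ t : ℂ in 𝓝[≠] 0, f (v + t • w) = 0) {t : ℂ} (ht : v + t • w ∈ B) :
    f (v + t • w) = 0 := by
  let line : ℂ → E := fun t ↦ v + t • w
  have hline : Differentiable ℂ line := by fun_prop
  have hconvex : Convex ℝ (line ⁻¹' B) :=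
    (hBc.translate_preimage_right v).linear_preimage
      ((LinearMap.toSpanSingleton ℂ E w).restrictScalars ℝ)
  have hana : AnalyticOnNhd ℂ (f ∘ line) (line ⁻¹' B) :=
    (hf.comp hline.differentiableOn fun _ hx ↦ hx).analyticOnNhd (hBo.preimage hline.continuous)
  exact hana.eqOn_zero_of_preconnected_of_frequently_eq_zero hconvex.isPreconnected
    (z₀ := 0) (by simpa [line] using hv) h ht

lemma eq_zero_of_differentiableOn_of_eventually_eq_zero [CompleteSpace F] {f : E → F} {U : Set E}
    (hf : DifferentiableOn ℂ f U) (hUo : IsOpen U) (hUc : IsPreconnected U) {x₀ : E}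
    (hx₀ : x₀ ∈ U) (h : ∀ᶠ x in 𝓝 x₀, f x = 0) : ∀ x ∈ U, f x = 0 := by
  suffices U ⊆ {x | ∀ᶠ y in 𝓝 x, f y = 0} from fun x hx ↦ (this hx).self_of_nhds
  refine hUc.subset_of_closure_inter_subset isOpen_setOfPred_eventually_nhds ⟨x₀, hx₀, h⟩ ?_
  rintro p ⟨hp, hpU⟩
  obtain ⟨r, hr, hrU⟩ := Metric.isOpen_iff.1 hUo p hpU
  obtain ⟨q, hq, hpq⟩ := Metric.mem_closure_iff.1 hp r hr
  filter_upwards [ball_mem_nhds p hr] with x hx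
  have hlim : Tendsto (fun t : ℂ ↦ q + t • (x - q)) (𝓝 0) (𝓝 q) :=
    Continuous.tendsto' (by fun_prop) _ _ (by simp)
  have hfreq : ∃ᶠ t : ℂ in 𝓝[≠] 0, f (q + t • (x - q)) = 0 :=
    ((hlim.eventually hq).filter_mono nhdsWithin_le_nhds).frequently
  simpa using eq_zero_of_frequently_eq_zero_on_complex_line (hf.mono hrU) isOpen_ball
    (convex_ball p r) (mem_ball'.2 hpq) hfreq (t := 1) (by simpa using hx)

lemma exists_continuous_conj_fixed_decomposition {σ : E →L⋆[ℂ] E} (hσ : Function.Involutive σ) :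
    ∃ v w : E → E, Continuous v ∧ ∀ x, σ (v x) = v x ∧ σ (w x) = w x ∧
      v x + Complex.I • w x = x ∧ (σ x = x → v x = x) := by
  let v : E → E := fun x ↦ (1 / 2 : ℂ) • (x + σ x)
  let w : E → E := fun x ↦ (-Complex.I / 2) • (x - σ x)
  have hv : Continuous v := by fun_prop
  refine ⟨v, w, hv, fun x ↦ ⟨?_, ?_, ?_, fun hx ↦ ?_⟩⟩
  · simp only [v, map_smulₛₗ, map_add, hσ x, map_div₀, map_one, map_ofNat, add_comm]
  · simp only [w, map_smulₛₗ, map_sub, hσ x, map_div₀, map_neg, Complex.conj_I, map_ofNat]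
    module
  · have hI : Complex.I * (-Complex.I / 2) = 1 / 2 := by
      linear_combination (-1 / 2) * Complex.I_mul_I
    simp only [v, w, smul_smul, hI]
    module
  · simp only [v, hx]
    module

lemma eventually_eq_zero_of_eventually_conj_fixed [CompleteSpace F] {σ : E →L⋆[ℂ] E}
    (hσ : Function.Involutive σ) {f : E → F} {x₀ : E} (hx₀ : σ x₀ = x₀)
    (hf : ∀ᶠ x in 𝓝 x₀, DifferentiableAt ℂ f x) (h : ∀ᶠ x in 𝓝 x₀, σ x = x → f x = 0) :
    ∀ᶠ x in 𝓝 x₀, f x = 0 := by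
  obtain ⟨v, w, hv, hvw⟩ := exists_continuous_conj_fixed_decomposition hσ
  choose hσv hσw hdecomp hv_fixed using hvw
  obtain ⟨r, hr, hball⟩ := Metric.eventually_nhds_iff_ball.1 (hf.and h)
  have hdiff : DifferentiableOn ℂ f (ball x₀ r) := fun y hy ↦
    (hball y hy).1.differentiableWithinAt
  have hv_ball : ∀ᶠ x in 𝓝 x₀, v x ∈ ball x₀ r :=
    (hv.tendsto' x₀ x₀ (hv_fixed x₀ hx₀)).eventually (ball_mem_nhds x₀ hr)
  filter_upwards [hv_ball, ball_mem_nhds x₀ hr] with x hvx hx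
  have hlim : Tendsto (fun s : ℝ ↦ v x + (s : ℂ) • w x) (𝓝 0) (𝓝 (v x)) :=
    Continuous.tendsto' (by fun_prop) _ _ (by simp)
  have hreal : ∀ᶠ s : ℝ in 𝓝 0, f (v x + (s : ℂ) • w x) = 0 := by
    filter_upwards [hlim.eventually (isOpen_ball.mem_nhds hvx)] with s hs
    exact (hball _ hs).2 (by rw [map_add, map_smulₛₗ, hσv, hσw, Complex.conj_ofReal])
  rw [← hdecomp x] at hx ⊢
  exact eq_zero_of_frequently_eq_zero_on_complex_line hdiff isOpen_ball (convex_ball x₀ r) hvx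
    (frequently_nhdsNE_zero_of_eventually_ofReal hreal) hx

end IdentityPrinciples

section Polarization

open Filter Topology

variable {V W F : Type*}

/-- The shear `((z, w), ζ) ↦ ((z, w + h (ζ, z)), ζ)` of the space in which `ζ` plays the role of
`z̄`. For suitable `h` it carries the fixed set of `conjSwap` onto a polarized real submanifold. -/
def shear [Add W] (h : V × V → W) (x : (V × W) × V) : (V × W) × V :=
  ((x.1.1, x.1.2 + h (x.2, x.1.1)), x.2)

lemma shear_shear_neg [AddGroup W] (h : V × V → W) (x : (V × W) × V) :
    shear h (shear (-h) x) = x := by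
  simp [shear]

variable [NormedAddCommGroup V] [NormedSpace ℂ V] [StarAddMonoid V] [StarModule ℂ V]
  [ContinuousStar V] [NormedAddCommGroup W] [NormedSpace ℂ W] [StarAddMonoid W] [StarModule ℂ W]
  [ContinuousStar W]

variable (V W) in
/-- The antilinear involution `((z, u), ζ) ↦ ((ζ̄, ū), z̄)`, whose fixed points are the
`((z, u), z̄)` with `u` self-adjoint. -/
def conjSwap : (V × W) × V →L⋆[ℂ] (V × W) × V where
  toFun x := ((star x.2, star x.1.2), star x.1.1)
  map_add' x y := by simp
  map_smul' c x := by simp [star_smul]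
  cont := by fun_prop

lemma conjSwap_apply (x : (V × W) × V) :
    conjSwap V W x = ((star x.2, star x.1.2), star x.1.1) := rfl

lemma conjSwap_involutive : Function.Involutive (conjSwap V W) := fun x ↦ by
  simp [conjSwap_apply]

lemma conjSwap_eq_self_iff {x : (V × W) × V} :
    conjSwap V W x = x ↔ x.2 = star x.1.1 ∧ IsSelfAdjoint x.1.2 := by
  rw [conjSwap_apply, Prod.ext_iff, Prod.ext_iff, IsSelfAdjoint]
  exact ⟨fun ⟨⟨_, hu⟩, hζ⟩ ↦ ⟨hζ.symm, hu⟩, fun ⟨hζ, hu⟩ ↦ ⟨⟨by simp [hζ], hu⟩, hζ.symm⟩⟩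

lemma eventually_eq_zero_of_eventually_isSelfAdjoint_sub [NormedAddCommGroup F] [NormedSpace ℂ F]
    [CompleteSpace F] {h : V × V → W} (hh : Differentiable ℂ h) {g : (V × W) × V → F} {p₀ : V × W}
    (hp₀ : IsSelfAdjoint (p₀.2 - h (star p₀.1, p₀.1)))
    (hg : ∀ᶠ x in 𝓝 (p₀, star p₀.1), DifferentiableAt ℂ g x)
    (hzero : ∀ᶠ p in 𝓝 p₀, IsSelfAdjoint (p.2 - h (star p.1, p.1)) → g (p, star p.1) = 0) :
    ∀ᶠ x in 𝓝 (p₀, star p₀.1), g x = 0 := by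
  have hshear : Differentiable ℂ (shear h) := by
    unfold shear
    fun_prop
  have hshear_neg : Continuous (shear (-h)) := by
    have := hh.continuous
    unfold shear
    fun_prop
  set x₀ := (p₀, star p₀.1)
  set y₀ := shear (-h) x₀
  have hy₀_fixed : conjSwap V W y₀ = y₀ :=
    conjSwap_eq_self_iff.2 ⟨rfl, by simpa [y₀, x₀, shear, sub_eq_add_neg] using hp₀⟩
  have hlim : Tendsto (shear h) (𝓝 y₀) (𝓝 x₀) :=
    hshear.continuous.tendsto' _ _ (shear_shear_neg h x₀)
  have hstraight : ∀ᶠ y in 𝓝 y₀, g (shear h y) = 0 := by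
    refine eventually_eq_zero_of_eventually_conj_fixed conjSwap_involutive hy₀_fixed ?_ ?_
    · filter_upwards [hlim.eventually hg] with y hy
      exact hy.comp y (hshear y)
    · have hfst : Tendsto (fun y ↦ (shear h y).1) (𝓝 y₀) (𝓝 p₀) := hlim.fst_nhds
      filter_upwards [hfst.eventually hzero] with y hy hy_fixed
      obtain ⟨hζ, hu⟩ := conjSwap_eq_self_iff.1 hy_fixed
      have hshear_y : shear h y = ((shear h y).1, star (shear h y).1.1) := Prod.ext rfl hζ
      rw [hshear_y]
      exact hy (by simpa [shear, hζ] using hu)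
  filter_upwards [hshear_neg.continuousAt.eventually hstraight] with x hx
  rwa [shear_shear_neg] at hx

end Polarization

open Topology in
lemma eq_zero_and_eq_zero_of_eventually_sub_dotProduct_eq_zero {𝕜 ι : Type*}
    [NontriviallyNormedField 𝕜] [Fintype ι] {c : 𝕜} {v ζ₀ : ι → 𝕜}
    (h : ∀ᶠ ζ in 𝓝 ζ₀, c - ζ ⬝ᵥ v = 0) : c = 0 ∧ v = 0 := by
  have hv : v = 0 := dotProduct_eq_zero v fun u ↦ by
    have hlim : Filter.Tendsto (fun t : 𝕜 ↦ ζ₀ + t • u) (𝓝 0) (𝓝 ζ₀) :=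
      Continuous.tendsto' (by fun_prop) _ _ (by simp)
    have hne : ∀ᶠ t : 𝕜 in 𝓝[≠] 0, t ≠ 0 := self_mem_nhdsWithin
    obtain ⟨t, ht, ht0⟩ := (((hlim.eventually h).filter_mono nhdsWithin_le_nhds).and hne).exists
    have htu : t * (u ⬝ᵥ v) = 0 := by
      rw [add_dotProduct, smul_dotProduct, smul_eq_mul] at ht
      linear_combination h.self_of_nhds - ht
    rw [dotProduct_comm]
    exact (mul_eq_zero.1 htu).resolve_left ht0
  exact ⟨by simpa [hv] using h.self_of_nhds, hv⟩

section Quadric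

open Filter Topology

variable {ι κ : Type*} [Fintype ι]

/-- The quadric `Q = {(z, w) : Im wⱼ = z̄ᵀAⱼz}`. The right-hand side is real for Hermitian `Aⱼ`;
its real part is taken so that `Q` is defined for all matrices. -/
def quadric (A : κ → Matrix ι ι ℂ) : Set ((ι → ℂ) × (κ → ℂ)) :=
  {p | ∀ j, (p.2 j).im = (star p.1 ⬝ᵥ A j *ᵥ p.1).re}

/-- The map `(ζ, z) ↦ i ζᵀAz`, for which `(z, w) ∈ Q` if and only if `w - i z̄ᵀAz` is real. -/
noncomputable def quadricShift (A : κ → Matrix ι ι ℂ) (x : (ι → ℂ) × (ι → ℂ)) : κ → ℂ :=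
  fun j ↦ Complex.I * (x.1 ⬝ᵥ A j *ᵥ x.2)

/-- The functions `Xρⱼ = bⱼ / (2i) - z̄ᵀAⱼa` for `X = Σ aᵢ ∂/∂zᵢ + Σ bⱼ ∂/∂wⱼ`, polarized: they are
evaluated at `((z, w), ζ)` with `ζ` in place of `z̄`. -/
noncomputable def polarizedTangency (A : κ → Matrix ι ι ℂ) (a : (ι → ℂ) × (κ → ℂ) → ι → ℂ)
    (b : (ι → ℂ) × (κ → ℂ) → κ → ℂ) (x : ((ι → ℂ) × (κ → ℂ)) × (ι → ℂ)) : κ → ℂ :=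
  fun j ↦ b x.1 j / (2 * Complex.I) - x.2 ⬝ᵥ A j *ᵥ a x.1

variable {A : κ → Matrix ι ι ℂ} {a : (ι → ℂ) × (κ → ℂ) → ι → ℂ} {b : (ι → ℂ) × (κ → ℂ) → κ → ℂ}
  {p₀ : (ι → ℂ) × (κ → ℂ)}

lemma mem_quadric_iff_isSelfAdjoint {p : (ι → ℂ) × (κ → ℂ)} :
    p ∈ quadric A ↔ IsSelfAdjoint (p.2 - quadricShift A (star p.1, p.1)) := by
  simp [quadric, quadricShift, Pi.isSelfAdjoint, ← Complex.im_eq_zero_iff_isSelfAdjoint,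
    sub_eq_zero]

lemma eq_zero_and_eq_zero_of_eventually_polarizedTangency_eq_zero
    (hker : (⋂ j, {z : ι → ℂ | A j *ᵥ z = 0}) = {0}) {p : (ι → ℂ) × (κ → ℂ)} {ζ₀ : ι → ℂ}
    (h : ∀ᶠ ζ in 𝓝 ζ₀, polarizedTangency A a b (p, ζ) = 0) : a p = 0 ∧ b p = 0 := by
  have hcoeff (j : κ) : b p j / (2 * Complex.I) = 0 ∧ A j *ᵥ a p = 0 :=
    eq_zero_and_eq_zero_of_eventually_sub_dotProduct_eq_zero (h.mono fun _ hζ ↦ congrFun hζ j)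
  have hmem : a p ∈ ⋂ j, {z : ι → ℂ | A j *ᵥ z = 0} := Set.mem_iInter.2 fun j ↦ (hcoeff j).2
  exact ⟨by simpa [hker] using hmem, funext fun j ↦ by simpa using (hcoeff j).1⟩

lemma differentiable_quadricShift : Differentiable ℂ (quadricShift A) := by
  unfold quadricShift
  simp only [dotProduct, mulVec]
  fun_prop

variable [Finite κ]

lemma differentiableAt_polarizedTangency {x : ((ι → ℂ) × (κ → ℂ)) × (ι → ℂ)}
    (ha : DifferentiableAt ℂ a x.1) (hb : DifferentiableAt ℂ b x.1) :
    DifferentiableAt ℂ (polarizedTangency A a b) x := by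
  cases nonempty_fintype κ
  unfold polarizedTangency
  simp only [dotProduct, mulVec, div_eq_mul_inv]
  fun_prop

lemma eventually_polarizedTangency_eq_zero (hp₀ : p₀ ∈ quadric A)
    (ha : ∀ᶠ p in 𝓝 p₀, DifferentiableAt ℂ a p) (hb : ∀ᶠ p in 𝓝 p₀, DifferentiableAt ℂ b p)
    (htan : ∀ᶠ p in 𝓝 p₀, p ∈ quadric A →
      ∀ j, b p j / (2 * Complex.I) - star p.1 ⬝ᵥ A j *ᵥ a p = 0) :
    ∀ᶠ x in 𝓝 (p₀, star p₀.1), polarizedTangency A a b x = 0 := by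
  cases nonempty_fintype κ
  have hfst : Tendsto Prod.fst (𝓝 (p₀, star p₀.1)) (𝓝 p₀) := continuous_fst.continuousAt
  refine eventually_eq_zero_of_eventually_isSelfAdjoint_sub (h := quadricShift A)
    differentiable_quadricShift (mem_quadric_iff_isSelfAdjoint.1 hp₀) ?_ ?_
  · filter_upwards [hfst.eventually ha, hfst.eventually hb] with x hax hbx
    exact differentiableAt_polarizedTangency hax hbx
  · filter_upwards [htan] with p hp hsa
    exact funext (hp (mem_quadric_iff_isSelfAdjoint.2 hsa))

theorem condition_b_implies_holomorphically_nondegenerate_general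
    (hker : (⋂ j, {z : ι → ℂ | A j *ᵥ z = 0}) = {0})
    {U : Set ((ι → ℂ) × (κ → ℂ))} (hUo : IsOpen U) (hUc : IsPreconnected U)
    (hp₀U : p₀ ∈ U) (hp₀ : p₀ ∈ quadric A)
    (ha : DifferentiableOn ℂ a U) (hb : DifferentiableOn ℂ b U)
    (htan : ∀ᶠ p in 𝓝 p₀, p ∈ quadric A →
      ∀ j, b p j / (2 * Complex.I) - star p.1 ⬝ᵥ A j *ᵥ a p = 0) :
    ∀ p ∈ U, a p = 0 ∧ b p = 0 := by
  cases nonempty_fintype κ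
  have hU : U ∈ 𝓝 p₀ := hUo.mem_nhds hp₀U
  have hpol := eventually_polarizedTangency_eq_zero hp₀
    (ha.eventually_differentiableAt hU) (hb.eventually_differentiableAt hU) htan
  have hlocal : ∀ᶠ p in 𝓝 p₀, a p = 0 ∧ b p = 0 := by
    filter_upwards [hpol.curry_nhds] with p hp
    exact eq_zero_and_eq_zero_of_eventually_polarizedTangency_eq_zero hker hp
  intro p hp
  exact ⟨eq_zero_of_differentiableOn_of_eventually_eq_zero ha hUo hUc hp₀U
      (hlocal.mono fun _ h ↦ h.1) p hp,
    eq_zero_of_differentiableOn_of_eventually_eq_zero hb hUo hUc hp₀U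
      (hlocal.mono fun _ h ↦ h.2) p hp⟩

end Quadric

/-- Condition (b) implies the quadric `Q = {Im wⱼ = z̄ᵀAⱼz}` is holomorphically
nondegenerate: any holomorphic vector field `X = Σ aᵢ ∂/∂zᵢ + Σ bⱼ ∂/∂wⱼ` tangent to `Q`
(i.e. `bⱼ/(2i) - z̄ᵀAⱼa = 0` on `Q`) vanishes identically. -/
theorem condition_b_implies_holomorphically_nondegenerate
    (n d : ℕ)
    (A : Fin d → Matrix (Fin n) (Fin n) ℂ)
    (hA : ∀ j, (A j).IsHermitian)
    (hker : (⋂ j, {z : Fin n → ℂ | (A j).mulVec z = 0}) = {0})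
    (U : Set ((Fin n → ℂ) × (Fin d → ℂ))) (hUo : IsOpen U) (hUc : IsPreconnected U)
    (hU0 : (0 : (Fin n → ℂ) × (Fin d → ℂ)) ∈ U)
    (a : (Fin n → ℂ) × (Fin d → ℂ) → Fin n → ℂ)
    (b : (Fin n → ℂ) × (Fin d → ℂ) → Fin d → ℂ)
    (ha : DifferentiableOn ℂ a U) (hb : DifferentiableOn ℂ b U)
    (htan : ∀ p ∈ U, (∀ j, (p.2 j).im = (star p.1 ⬝ᵥ (A j).mulVec p.1).re) →
      ∀ j, b p j / (2 * Complex.I) - star p.1 ⬝ᵥ (A j).mulVec (a p) = 0) :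
    ∀ p ∈ U, a p = 0 ∧ b p = 0 := by
  exact condition_b_implies_holomorphically_nondegenerate_general hker hUo hUc hU0
    (by simp [quadric]) ha hb (Filter.eventually_of_mem (hUo.mem_nhds hU0) htan)
end

section
/- (Chern–Moser) Let A be an invertible Hermitian (N−1)×(N−1) complex matrix, let h be a real-analytic real-valued function on a neighborhood of 0 in ℂ^{N−1}×ℝ with h(0) = 0 and all first- and second-order derivatives of h vanishing at 0, and let M = {(z, w) near 0 in ℂ^{N−1}×ℂ : Im w = z̄ᵀ A z + h(z, Re w)} (a real-analytic hypersurface through 0 with nondegenerate Levi form at 0). Let F and G be holomorphic maps from an open neighborhood of 0 in ℂ^N to ℂ^N with F(0) = G(0) = 0 and invertible differentials at 0, mapping M (intersected with their domains) into M. If F and G have the same derivatives at 0 up to order 2 (the same 2-jet at 0), then F = G on a neighborhood of 0. -/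
open Matrix

/-!
Give `z` weight one and `w` weight two, and let `f` and `g` be the lowest parts of the tangential
and normal components of `F - G`, of weights `m` and `m + 1`. Comparing `F` and `G` along curves
`(t z, t² ω(t))` in `M` shows, as `t → 0`, that `Im g = 2 Re ⟨C z, f⟩` on the model hyperquadric
`Im w = Q z`, where `⟨z, v⟩ = z̄ᵀ A v`, `Q z = ⟨z, z⟩` and `C` is the tangential part of the
differential of `G` at `0`. Replacing `z` by `ζ z` with `‖ζ‖ = 1` and comparing Fourier coefficients
in `ζ` gives polynomial identities in `u = Re w`. Since `u + i Q z` and `u - i Q z` are coprime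
where `Q z ≠ 0`, these identities force every coefficient of `f` and `g` beyond the 2-jet to vanish,
and the argument is repeated with `m + 1` in place of `m`.
-/

section Osgood

open Complex MeasureTheory Metric
open scoped Real Topology

variable {Y : Type*} [NormedAddCommGroup Y] [NormedSpace ℂ Y]
  {n : ℕ} {c : Fin n → ℂ} {R : Fin n → ℝ} {x : Fin n → ℂ}

theorem continuous_torusMap (c : Fin n → ℂ) (R : Fin n → ℝ) : Continuous (torusMap c R) := by
  unfold torusMap
  fun_prop

theorem torusMap_mem_pi_closedBall (c : Fin n → ℂ) (hR : ∀ i, 0 ≤ R i) (θ : Fin n → ℝ) :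
    torusMap c R θ ∈ Set.univ.pi fun i => closedBall (c i) (R i) :=
  fun i _ => circleMap_mem_closedBall (c i) (hR i) (θ i)

theorem torusMap_apply_sub_ne_zero (hx : ∀ i, x i ∈ ball (c i) (R i)) (θ : Fin n → ℝ)
    (i : Fin n) : torusMap c R θ i - x i ≠ 0 :=
  sub_ne_zero.2 (circleMap_ne_mem_ball (hx i) (θ i))

theorem torusIntegrable_cauchyKernel_smul {f : (Fin n → ℂ) → Y}
    (hf : ContinuousOn f (Set.univ.pi fun i => closedBall (c i) (R i)))
    (hx : ∀ i, x i ∈ ball (c i) (R i)) :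
    TorusIntegrable (fun ζ => (∏ i, (ζ i - x i)⁻¹) • f ζ) c R := by
  have hkernel : Continuous fun θ => ∏ i, (torusMap c R θ i - x i)⁻¹ :=
    continuous_finsetProd _ fun i _ =>
      (((continuous_apply i).comp (continuous_torusMap c R)).sub continuous_const).inv₀
        fun θ => torusMap_apply_sub_ne_zero hx θ i
  have hR : ∀ i, 0 ≤ R i := fun i => (pos_of_mem_ball (hx i)).le
  exact (hkernel.smul (hf.comp_continuous (continuous_torusMap c R)
    (torusMap_mem_pi_closedBall c hR))).integrableOn_Icc

theorem torusIntegral_cauchyKernel_smul [CompleteSpace Y] {f : (Fin n → ℂ) → Y}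
    (hf : DifferentiableOn ℂ f (Set.univ.pi fun i => closedBall (c i) (R i)))
    (hx : ∀ i, x i ∈ ball (c i) (R i)) :
    (∯ ζ in T(c, R), (∏ i, (ζ i - x i)⁻¹) • f ζ) = (2 * π * I : ℂ) ^ n • f x := by
  induction n with
  | zero => simp [torusIntegral_dim0, Subsingleton.elim c x]
  | succ n ih =>
    have hxc : ∀ i, x i ∈ closedBall (c i) (R i) := fun i => ball_subset_closedBall (hx i)
    have inner : ∀ a ∈ sphere (c 0) (R 0),
        (∯ y in T(c ∘ Fin.succ, R ∘ Fin.succ),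
          (∏ i, ((Fin.cons a y : Fin (n + 1) → ℂ) i - x i)⁻¹) • f (Fin.cons a y)) =
        (a - x 0)⁻¹ • (2 * π * I : ℂ) ^ n • f (Fin.cons a (Fin.tail x)) := by
      intro a ha
      have hslice : DifferentiableOn ℂ (fun y : Fin n → ℂ => f (Fin.cons a y))
          (Set.univ.pi fun i => closedBall (c i.succ) (R i.succ)) :=
        hf.comp (fun y _ => ((hasFDerivAt_const a y).finCons
          (hasFDerivAt_id y)).differentiableAt.differentiableWithinAt)
          fun y hy i _ => Fin.cases (sphere_subset_closedBall ha) (fun i => hy i trivial) i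
      simp only [Fin.prod_univ_succ, Fin.cons_zero, Fin.cons_succ, mul_smul, torusIntegral_smul]
      exact congrArg _ (ih hslice fun i => hx i.succ)
    have outer : DifferentiableOn ℂ (fun a : ℂ => f (Fin.cons a (Fin.tail x)))
        (closedBall (c 0) (R 0)) :=
      hf.comp (fun a _ => ((hasFDerivAt_id a).finCons
        (hasFDerivAt_const (Fin.tail x) a)).differentiableAt.differentiableWithinAt)
        fun a ha i _ => Fin.cases ha (fun i => hxc i.succ) i
    have hcircle := (outer.const_smul ((2 * π * I : ℂ) ^ n)).circleIntegral_sub_inv_smul (hx 0)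
    simp only [Pi.smul_apply, Fin.cons_self_tail] at hcircle
    rw [torusIntegral_succ (torusIntegrable_cauchyKernel_smul hf.continuousOn hx),
      circleIntegral.integral_congr (pos_of_mem_ball (hx 0)).le inner, hcircle, smul_smul,
      pow_succ']

section IntegralSMul

variable {K : Type*} [TopologicalSpace K] [CompactSpace K] [MeasurableSpace K]
  [OpensMeasurableSpace K] (μ : Measure K) [IsFiniteMeasure μ]

/-- Integration against a fixed continuous function, as a continuous linear map on `C(K, ℂ)`. -/
noncomputable def integralSMulCLM (g : C(K, Y)) : C(K, ℂ) →L[ℂ] Y :=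
  LinearMap.mkContinuous
    { toFun := fun φ => ∫ t, φ t • g t ∂μ
      map_add' := fun φ ψ => by
        have hint : ∀ χ : C(K, ℂ), Integrable (fun t => χ t • g t) μ := fun χ =>
          (χ • g).continuous.integrable_of_hasCompactSupport (.of_compactSpace _)
        simp only [ContinuousMap.add_apply, add_smul]
        exact integral_add (hint φ) (hint ψ)
      map_smul' := fun a φ => by
        simp only [ContinuousMap.smul_apply, smul_assoc, integral_smul, RingHom.id_apply] }
    (‖g‖ * μ.real Set.univ) fun φ => by
      refine (norm_integral_le_of_norm_le_const (C := ‖φ‖ * ‖g‖) (.of_forall fun t => ?_)).trans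
        (by ring_nf; rfl)
      rw [norm_smul]
      gcongr
      exacts [φ.norm_coe_le_norm t, g.norm_coe_le_norm t]

theorem integralSMulCLM_apply (g : C(K, Y)) (φ : C(K, ℂ)) :
    integralSMulCLM μ g φ = ∫ t, φ t • g t ∂μ := rfl

end IntegralSMul

section CauchyKernel

variable {K ι : Type*} [TopologicalSpace K]

theorem isUnit_sub_algebraMap_of_forall_ne_zero (e : C(K, ℂ)) {a : ℂ} (ha : ∀ t, e t - a ≠ 0) :
    IsUnit (e - algebraMap ℂ C(K, ℂ) a) :=
  (ContinuousMap.isUnit_iff_forall_ne_zero _).2 ha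

variable [Fintype ι]

theorem prod_inverse_sub_apply (e : ι → C(K, ℂ)) {x : ι → ℂ} (hx : ∀ t i, e i t - x i ≠ 0)
    (t : K) :
    (∏ i, Ring.inverse (e i - algebraMap ℂ C(K, ℂ) (x i))) t = ∏ i, (e i t - x i)⁻¹ := by
  rw [ContinuousMap.prod_apply]
  refine Finset.prod_congr rfl fun i _ => eq_inv_of_mul_eq_one_left ?_
  exact congrArg (fun φ : C(K, ℂ) => φ t) (Ring.inverse_mul_cancel _
    (isUnit_sub_algebraMap_of_forall_ne_zero (e i) fun t => hx t i))

theorem analyticAt_prod_inverse_sub [CompactSpace K] (e : ι → C(K, ℂ)) {x : ι → ℂ}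
    (hx : ∀ t i, e i t - x i ≠ 0) :
    AnalyticAt ℂ (fun y : ι → ℂ => ∏ i, Ring.inverse (e i - algebraMap ℂ C(K, ℂ) (y i))) x := by
  refine Finset.analyticAt_fun_prod _ fun i _ => ?_
  have hinverse := analyticAt_inverse (𝕜 := ℂ)
    (isUnit_sub_algebraMap_of_forall_ne_zero (e i) fun t => hx t i).unit
  exact hinverse.fun_comp (f := fun y : ι → ℂ => e i - algebraMap ℂ C(K, ℂ) (y i)) <|
    analyticAt_const.sub (((Algebra.linearMap ℂ C(K, ℂ)).toContinuousLinearMap.comp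
      (ContinuousLinearMap.proj (R := ℂ) (φ := fun _ : ι => ℂ) i)).analyticAt x)

end CauchyKernel

/- The Cauchy kernel depends analytically on `x` as an element of the Banach algebra `C(S, ℂ)`, and
integrating it against `f` is continuous and linear. -/
theorem analyticAt_of_differentiableOn_polydisc [CompleteSpace Y] {f : (Fin n → ℂ) → Y}
    (hf : DifferentiableOn ℂ f (Set.univ.pi fun i => closedBall (c i) (R i)))
    (hx : ∀ i, x i ∈ ball (c i) (R i)) : AnalyticAt ℂ f x := by
  let S : Set (Fin n → ℝ) := Set.Icc 0 fun _ => 2 * π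
  let μ : Measure S := volume.comap Subtype.val
  have : IsFiniteMeasure μ := ⟨by
    rw [comap_subtype_coe_apply measurableSet_Icc, Set.image_univ, Subtype.range_coe]
    exact isCompact_Icc.measure_lt_top⟩
  have hT : Continuous fun θ : S => torusMap c R θ :=
    (continuous_torusMap c R).comp continuous_subtype_val
  have hjacobian : Continuous fun θ : Fin n → ℝ => (∏ i, (R i * exp (θ i * I) * I : ℂ)) := by
    fun_prop
  let e : Fin n → C(S, ℂ) := fun i => ⟨fun θ => torusMap c R θ i, (continuous_apply i).comp hT⟩
  let g : C(S, Y) := ⟨fun θ => (∏ i, (R i * exp (θ.1 i * I) * I : ℂ)) • f (torusMap c R θ),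
    (hjacobian.comp continuous_subtype_val).smul (hf.continuousOn.comp_continuous hT fun θ =>
      torusMap_mem_pi_closedBall c (fun i => (pos_of_mem_ball (hx i)).le) θ)⟩
  have hkernel := analyticAt_prod_inverse_sub e fun θ => torusMap_apply_sub_ne_zero hx θ
  have hintegral := ((integralSMulCLM μ g).analyticAt _).fun_comp hkernel
  refine (hintegral.const_smul (c := ((2 * π * I : ℂ) ^ n)⁻¹)).congr ?_
  have hball : (Set.univ.pi fun i => ball (c i) (R i)) ∈ 𝓝 x :=
    set_pi_mem_nhds Set.finite_univ fun i _ => isOpen_ball.mem_nhds (hx i)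
  filter_upwards [hball] with y hy
  rw [Pi.smul_apply, inv_smul_eq_iff₀ (pow_ne_zero _ two_pi_I_ne_zero),
    ← torusIntegral_cauchyKernel_smul hf fun i => hy i trivial, integralSMulCLM_apply,
    torusIntegral, ← integral_subtype_comap measurableSet_Icc]
  refine integral_congr_ae (.of_forall fun θ => ?_)
  beta_reduce
  rw [prod_inverse_sub_apply e fun θ => torusMap_apply_sub_ne_zero (fun i => hy i trivial) θ]
  exact smul_comm _ _ _

theorem analyticAt_of_differentiableOn [CompleteSpace Y] {X : Type*} [NormedAddCommGroup X]
    [NormedSpace ℂ X] [FiniteDimensional ℂ X] {f : X → Y} {U : Set X} {x : X}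
    (hf : DifferentiableOn ℂ f U) (hU : U ∈ 𝓝 x) : AnalyticAt ℂ f x := by
  let L : X ≃L[ℂ] (Fin (Module.finrank ℂ X) → ℂ) := ContinuousLinearEquiv.ofFinrankEq (by simp)
  obtain ⟨r, hr, hrU⟩ := nhds_basis_closedBall.mem_iff.1
    (L.symm.continuous.continuousAt (x := L x) |>.preimage_mem_nhds (by simpa using hU))
  rw [closedBall_pi _ hr.le] at hrU
  have hanalytic : AnalyticAt ℂ (f ∘ L.symm) (L x) :=
    analyticAt_of_differentiableOn_polydisc
      (hf.comp L.symm.differentiable.differentiableOn hrU) fun i => mem_ball_self hr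
  simpa [Function.comp_def] using hanalytic.fun_comp (L.analyticAt x)

end Osgood

section Polynomials

open Complex Polynomial
open scoped ComplexConjugate

theorem infinite_norm_eq_one : {ζ : ℂ | ‖ζ‖ = 1}.Infinite := by
  have hsphere := (isConnected_sphere (E := ℂ) (by simp [Complex.rank_real_complex])
    0 zero_le_one).isPreconnected.infinite_of_nontrivial ⟨1, by simp, -1, by simp, by norm_num⟩
  exact hsphere.mono fun ζ hζ => by simpa using hζ

theorem ne_zero_of_norm_eq_one {ζ : ℂ} (hζ : ‖ζ‖ = 1) : ζ ≠ 0 :=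
  norm_ne_zero_iff.1 (hζ ▸ one_ne_zero)

theorem eval_reflect_map_conj {P : ℂ[X]} {N : ℕ} (hP : P.natDegree ≤ N) {ζ : ℂ} (hζ : ‖ζ‖ = 1) :
    (reflect N (P.map (starRingEnd ℂ))).eval ζ = ζ ^ N * conj (P.eval ζ) := by
  have hζ0 : ζ ≠ 0 := ne_zero_of_norm_eq_one hζ
  let _ : Invertible ζ⁻¹ := invertibleOfNonzero (inv_ne_zero hζ0)
  have hreflect := eval₂_reflect_mul_pow (RingHom.id ℂ) ζ⁻¹ N (P.map (starRingEnd ℂ))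
    (natDegree_map_le.trans hP)
  rw [invOf_eq_inv, inv_inv, eval₂_id, eval₂_id, inv_eq_conj hζ, eval_map_apply,
    ← inv_eq_conj hζ, inv_pow] at hreflect
  rw [← hreflect]
  field_simp

theorem coeff_eq_of_eval_eq_pow_mul_conj {P : ℂ[X]} {k : ℕ}
    (hP : ∀ ζ : ℂ, ‖ζ‖ = 1 → P.eval ζ = ζ ^ k * conj (P.eval ζ)) (i : ℕ) :
    P.coeff i = if i ≤ k then conj (P.coeff (k - i)) else 0 := by
  let N := P.natDegree + k
  set R : ℂ[X] := reflect N (P.map (starRingEnd ℂ)) with hR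
  have hPR : X ^ N * P = X ^ k * R := by
    refine eq_of_infinite_eval_eq _ _ (infinite_norm_eq_one.mono fun ζ hζ => ?_)
    simp only [Set.mem_ofPred_eq, eval_mul, eval_pow, eval_X, hR,
      eval_reflect_map_conj (P := P) (N := N) (by lia) hζ]
    rw [mul_left_comm, ← hP ζ hζ]
  have hcoeff : P.coeff i = R.coeff (i + N - k) := by
    rw [← coeff_X_pow_mul P N i, hPR, show i + N = i + N - k + k by lia, coeff_X_pow_mul,
      Nat.add_sub_cancel]
  rw [hcoeff, hR, coeff_reflect, coeff_map]
  split_ifs with hik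
  · rw [revAt_le (by lia), show N - (i + N - k) = k - i by lia]
  · rw [revAt_eq_self_of_lt (by lia), coeff_eq_zero_of_natDegree_lt (by lia), map_zero]

theorem eq_of_eval_ofReal_eq {p r : ℂ[X]} (h : ∀ u : ℝ, p.eval (u : ℂ) = r.eval (u : ℂ)) :
    p = r := by
  refine eq_of_infinite_eval_eq _ _
    ((Set.infinite_range_of_injective ofReal_injective).mono ?_)
  rintro _ ⟨u, rfl⟩
  exact h u

theorem eq_zero_of_X_sub_C_pow_mul_eq {K : Type*} [Field K] {a b : K} (hab : a ≠ b) {k l : ℕ}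
    {p r : K[X]} (h : (X - C a) ^ k * p = (X - C b) ^ l * r) (hr : r.natDegree < k) : r = 0 := by
  have hdvd : (X - C a) ^ k ∣ r :=
    (isCoprime_X_sub_C_of_isUnit_sub (sub_ne_zero.2 hab).isUnit).pow.dvd_of_dvd_mul_left
      (Dvd.intro p h)
  exact eq_zero_of_dvd_of_natDegree_lt hdvd (by simpa [natDegree_pow] using hr)

end Polynomials

section ModelEquation

open Complex Polynomial
open scoped ComplexConjugate

theorem eq_zero_of_mul_pow_succ_eq {a b : ℂ} {q : ℝ} {j : ℕ}
    (h : ∀ u : ℝ, a * (u + q * I) ^ (j + 1) = b * (u + q * I) ^ j) : a = 0 ∧ b = 0 := by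
  have hpoly : (X - C (-(q * I))) ^ j * (C a * (X - C (-(q * I)))) =
      (X - C (-(q * I))) ^ j * C b :=
    eq_of_eval_ofReal_eq fun u => by
      simp only [eval_mul, eval_pow, eval_sub, eval_X, eval_C, sub_neg_eq_add]
      linear_combination h u
  have hlinear := mul_left_cancel₀ (pow_ne_zero j (X_sub_C_ne_zero _)) hpoly
  have ha : a = 0 := by simpa using congrArg (coeff · 1) hlinear
  subst ha
  simpa using hlinear.symm

theorem neg_mul_I_ne_mul_I {q : ℝ} (hq : q ≠ 0) : -(q * I) ≠ q * I :=
  neg_ne_self.2 (mul_ne_zero (ofReal_ne_zero.2 hq) I_ne_zero)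

theorem eq_zero_of_mul_pow_sub_eq_conj {a b c : ℂ} {q : ℝ} (hq : q ≠ 0) {j : ℕ}
    (h : ∀ u : ℝ, a * (u + q * I) ^ (j + 2) - b * (u + q * I) ^ (j + 1) =
      c * (u - q * I) ^ (j + 2)) : c = 0 := by
  have hpoly : (X - C (-(q * I))) ^ (j + 1) * (C a * (X - C (-(q * I))) - C b) =
      (X - C (q * I)) ^ (j + 2) * C c :=
    eq_of_eval_ofReal_eq fun u => by
      simp only [eval_mul, eval_pow, eval_sub, eval_X, eval_C, sub_neg_eq_add]
      linear_combination h u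
  exact C_eq_zero.1 (eq_zero_of_X_sub_C_pow_mul_eq (neg_mul_I_ne_mul_I hq) hpoly (by simp))

theorem eq_zero_of_mul_pow_sub_eq_conj_self {b c : ℂ} {q : ℝ} (hq : q ≠ 0) {j : ℕ}
    (h : ∀ u : ℝ, b * (u + q * I) ^ (j + 3) - c * (u + q * I) ^ (j + 2) =
      conj (b * (u + q * I) ^ (j + 3) - c * (u + q * I) ^ (j + 2))) :
    b = 0 ∧ c = 0 := by
  have hpoly : (X - C (-(q * I))) ^ (j + 2) * (C b * (X - C (-(q * I))) - C c) =
      (X - C (q * I)) ^ (j + 2) * (C (conj b) * (X - C (q * I)) - C (conj c)) :=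
    eq_of_eval_ofReal_eq fun u => by
      have hu := h u
      simp only [map_sub, map_mul, map_pow, map_add, conj_ofReal, conj_I, mul_neg,
        ← sub_eq_add_neg] at hu
      simp only [eval_mul, eval_pow, eval_sub, eval_X, eval_C, sub_neg_eq_add]
      linear_combination hu
  have hdeg : (C (conj b) * (X - C (q * I)) - C (conj c)).natDegree < j + 2 := by
    compute_degree!
  have hzero := eq_zero_of_X_sub_C_pow_mul_eq (neg_mul_I_ne_mul_I hq) hpoly hdeg
  have hb : b = 0 := by simpa using congrArg (coeff · 1) hzero
  subst hb
  simpa using hzero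

/-- The bidegrees `(i, j)` of the monomials `zⁱ wʲ` of weight `m`, where `z` has weight one and
`w` has weight two. -/
def weightedBidegrees (m : ℕ) : Finset (ℕ × ℕ) :=
  (Finset.range (m + 1) ×ˢ Finset.range (m + 1)).filter fun x => x.1 + 2 * x.2 = m

theorem mem_weightedBidegrees {m : ℕ} {x : ℕ × ℕ} :
    x ∈ weightedBidegrees m ↔ x.1 + 2 * x.2 = m := by
  simp only [weightedBidegrees, Finset.mem_filter, Finset.mem_product, Finset.mem_range]
  lia

/-- The part of weight `m` of `∑ a i j * ζ ^ i * w ^ j`, as a polynomial in `ζ`. -/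
noncomputable def weightedPolynomial (a : ℕ → ℕ → ℂ) (m : ℕ) (w : ℂ) : ℂ[X] :=
  ∑ x ∈ weightedBidegrees m, C (a x.1 x.2 * w ^ x.2) * X ^ x.1

theorem coeff_weightedPolynomial (a : ℕ → ℕ → ℂ) {m i j : ℕ} (h : i + 2 * j = m) (w : ℂ) :
    (weightedPolynomial a m w).coeff i = a i j * w ^ j := by
  simp only [weightedPolynomial, finsetSum_coeff, coeff_C_mul, coeff_X_pow]
  rw [Finset.sum_eq_single (i, j)]
  · simp
  · rintro ⟨i', j'⟩ hx hne
    rw [mem_weightedBidegrees] at hx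
    rw [if_neg (by grind), mul_zero]
  · exact fun hx => absurd (mem_weightedBidegrees.2 h) hx

theorem coeff_weightedPolynomial_of_lt (a : ℕ → ℕ → ℂ) {m i : ℕ} (h : m < i) (w : ℂ) :
    (weightedPolynomial a m w).coeff i = 0 := by
  simp only [weightedPolynomial, finsetSum_coeff, coeff_C_mul, coeff_X_pow]
  refine Finset.sum_eq_zero fun x hx => ?_
  rw [mem_weightedBidegrees] at hx
  rw [if_neg (by lia), mul_zero]

theorem coeff_X_mul_sub_of_im_eval_eq {f g : ℂ[X]}
    (h : ∀ ζ : ℂ, ‖ζ‖ = 1 → (g.eval ζ).im = 2 * (conj ζ * f.eval ζ).re) (i : ℕ) :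
    (X * g - C (2 * I) * f).coeff i =
      if i ≤ 2 then conj ((X * g - C (2 * I) * f).coeff (2 - i)) else 0 := by
  refine coeff_eq_of_eval_eq_pow_mul_conj (fun ζ hζ => ?_) i
  have hunit : ζ * conj ζ = 1 := by rw [mul_conj, normSq_eq_norm_sq, hζ]; simp
  have hreal : conj (g.eval ζ - 2 * I * (conj ζ * f.eval ζ)) =
      g.eval ζ - 2 * I * (conj ζ * f.eval ζ) := by
    rw [conj_eq_iff_im]
    simp [mul_assoc, h ζ hζ]
  simp only [map_sub, map_mul, conj_conj, map_ofNat, conj_I] at hreal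
  simp only [eval_sub, eval_mul, eval_X, eval_C, eval_ofNat, map_sub, map_mul, map_ofNat, conj_I]
  linear_combination -ζ * hreal + (2 * I * f.eval ζ - ζ * conj (g.eval ζ)) * hunit

/-- The functions `f = ∑ a i j * z ^ i * w ^ j`, of weight `m`, and `g = ∑ b i j * z ^ i * w ^ j`,
of weight `m + 1`, satisfy `Im g = 2 Re (conj z * f)` for `‖z‖ = 1` and `w = u + q * I`, `u` real,
that is, on the circles over one complex line in the model hyperquadric `Im w = Q z`. -/
def SolvesModelEquation (q : ℝ) (m : ℕ) (a b : ℕ → ℕ → ℂ) : Prop :=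
  ∀ (u : ℝ) (ζ : ℂ), ‖ζ‖ = 1 →
    ((weightedPolynomial b (m + 1) (u + q * I)).eval ζ).im =
      2 * (conj ζ * (weightedPolynomial a m (u + q * I)).eval ζ).re

namespace SolvesModelEquation

variable {q : ℝ} {m : ℕ} {a b : ℕ → ℕ → ℂ}

theorem coeff_succ_of_two_le (h : SolvesModelEquation q m a b) {i : ℕ} (hi : 2 ≤ i) (u : ℝ) :
    (weightedPolynomial b (m + 1) (u + q * I)).coeff i =
      2 * I * (weightedPolynomial a m (u + q * I)).coeff (i + 1) := by
  have hcoeff := coeff_X_mul_sub_of_im_eval_eq (h u) (i + 1)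
  rw [if_neg (by lia), coeff_sub, coeff_X_mul, coeff_C_mul] at hcoeff
  exact sub_eq_zero.1 hcoeff

theorem eq_zero_of_three_le (h : SolvesModelEquation q m a b) {i j : ℕ} (hij : i + 3 + 2 * j = m) :
    a (i + 3) j = 0 ∧ b (i + 2) (j + 1) = 0 := by
  have hcoeff : ∀ u : ℝ, b (i + 2) (j + 1) * (u + q * I) ^ (j + 1) =
      2 * I * a (i + 3) j * (u + q * I) ^ j := fun u => by
    have hu := h.coeff_succ_of_two_le (i := i + 2) (by lia) u
    rwa [coeff_weightedPolynomial b (j := j + 1) (by lia),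
      coeff_weightedPolynomial a hij, ← mul_assoc] at hu
  simpa [and_comm] using eq_zero_of_mul_pow_succ_eq hcoeff

theorem right_apply_succ_zero (h : SolvesModelEquation q m a b) (hm : 1 ≤ m) :
    b (m + 1) 0 = 0 := by
  have hu := h.coeff_succ_of_two_le (i := m + 1) (by lia) 0
  rwa [coeff_weightedPolynomial b (j := 0) rfl, coeff_weightedPolynomial_of_lt a (by lia),
    pow_zero, mul_one, mul_zero] at hu

theorem mul_pow_sub_eq_conj (h : SolvesModelEquation q m a b) {j : ℕ} (hj : 2 * (j + 1) = m)
    (u : ℝ) :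
    b 1 (j + 1) * (u + q * I) ^ (j + 1) - 2 * I * a 2 j * (u + q * I) ^ j =
      2 * I * conj (a 0 (j + 1)) * (u - q * I) ^ (j + 1) := by
  have hcoeff := coeff_X_mul_sub_of_im_eval_eq (h u) 2
  rw [if_pos le_rfl, coeff_sub, coeff_X_mul, coeff_C_mul, coeff_sub, coeff_C_mul, Nat.sub_self,
    coeff_X_mul_zero, coeff_weightedPolynomial b (j := j + 1) (by lia),
    coeff_weightedPolynomial a (j := j) (by lia),
    coeff_weightedPolynomial a (j := j + 1) (by lia)] at hcoeff
  simp only [map_sub, map_mul, map_pow, map_add, conj_ofReal, conj_I, map_ofNat, map_zero,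
    mul_neg, ← sub_eq_add_neg] at hcoeff
  linear_combination hcoeff

theorem left_eq_zero_of_even (h : SolvesModelEquation q m a b) (hq : q ≠ 0) {j : ℕ}
    (hj : 2 * (j + 2) = m) : a 0 (j + 2) = 0 := by
  have hzero := eq_zero_of_mul_pow_sub_eq_conj hq (h.mul_pow_sub_eq_conj (j := j + 1) hj)
  simpa using hzero

theorem eq_zero_of_left_eq_zero (h : SolvesModelEquation q m a b) {j : ℕ} (hj : 2 * (j + 1) = m)
    (ha : a 0 (j + 1) = 0) : a 2 j = 0 ∧ b 1 (j + 1) = 0 := by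
  have hzero := eq_zero_of_mul_pow_succ_eq (a := b 1 (j + 1)) (b := 2 * I * a 2 j)
    (q := q) (j := j) fun u => by
      have hu := h.mul_pow_sub_eq_conj hj u
      rw [ha, map_zero, mul_zero, zero_mul] at hu
      exact sub_eq_zero.1 hu
  simpa [and_comm] using hzero

theorem eq_zero_of_odd (h : SolvesModelEquation q m a b) (hq : q ≠ 0) {j : ℕ}
    (hj : 1 + 2 * (j + 2) = m) : a 1 (j + 2) = 0 ∧ b 0 (j + 3) = 0 := by
  have hcoeff : ∀ u : ℝ, (X * weightedPolynomial b (m + 1) (u + q * I) -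
      C (2 * I) * weightedPolynomial a m (u + q * I)).coeff 1 =
      b 0 (j + 3) * (u + q * I) ^ (j + 3) - 2 * I * a 1 (j + 2) * (u + q * I) ^ (j + 2) :=
    fun u => by
      rw [coeff_sub, coeff_X_mul, coeff_C_mul, coeff_weightedPolynomial b (j := j + 3) (by lia),
        coeff_weightedPolynomial a hj, mul_assoc (2 * I)]
  have hzero := eq_zero_of_mul_pow_sub_eq_conj_self hq fun u => by
    rw [← hcoeff]
    exact coeff_X_mul_sub_of_im_eval_eq (h u) 1
  simpa [and_comm] using hzero

theorem left_eq_zero (h : SolvesModelEquation q m a b) (hq : q ≠ 0)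
    (ha : ∀ i j, i + j ≤ 2 → a i j = 0) {i j : ℕ} (hij : i + 2 * j = m) : a i j = 0 := by
  rcases le_or_gt (i + j) 2 with hle | hlt
  · exact ha i j hle
  match i, j with
  | 0, j + 2 => exact h.left_eq_zero_of_even hq (by lia)
  | 1, j + 2 => exact (h.eq_zero_of_odd hq hij).1
  | 2, j + 1 =>
    exact (h.eq_zero_of_left_eq_zero (by lia) (h.left_eq_zero_of_even hq (by lia))).1
  | i + 3, j => exact (h.eq_zero_of_three_le hij).1

theorem right_eq_zero (h : SolvesModelEquation q m a b) (hq : q ≠ 0) (hm : 1 ≤ m)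
    (ha : ∀ i j, i + j ≤ 2 → a i j = 0) (hb : ∀ i j, i + j ≤ 2 → b i j = 0) {i j : ℕ}
    (hij : i + 2 * j = m + 1) : b i j = 0 := by
  rcases le_or_gt (i + j) 2 with hle | hlt
  · exact hb i j hle
  match i, j with
  | i, 0 =>
    obtain rfl : i = m + 1 := hij
    exact h.right_apply_succ_zero hm
  | 0, j + 3 => exact (h.eq_zero_of_odd hq (by lia)).2
  | 1, j + 1 =>
    exact (h.eq_zero_of_left_eq_zero (by lia) (h.left_eq_zero hq ha (by lia))).2
  | i + 2, j + 1 => exact (h.eq_zero_of_three_le (by lia)).2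

end SolvesModelEquation

end ModelEquation

section VectorModelEquation

open Complex Filter Polynomial
open scoped Topology ComplexConjugate

theorem eq_zero_of_add_conj_mul_eq_zero {P R : ℂ → ℂ} (hP : DifferentiableAt ℂ P 0)
    (hR : DifferentiableAt ℂ R 0) (h : ∀ s, P s + conj s * R s = 0) : R 0 = 0 := by
  have hline : ∀ v : ℂ, deriv P 0 * v + conj v * R 0 = 0 := by
    intro v
    have hv : HasDerivAt (fun t : ℝ => (t : ℂ) * v) v 0 := by
      simpa using (hasDerivAt_id (0 : ℝ)).ofReal_comp.mul_const v
    have hconj : HasDerivAt (fun t : ℝ => (t : ℂ) * conj v) (conj v) 0 := by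
      simpa using (hasDerivAt_id (0 : ℝ)).ofReal_comp.mul_const (conj v)
    have hPv := hP.hasDerivAt.comp_of_eq (0 : ℝ) hv (by simp)
    have hRv := hR.hasDerivAt.comp_of_eq (0 : ℝ) hv (by simp)
    have hsum := hPv.add (hconj.mul hRv)
    have hzero : HasDerivAt (fun _ : ℝ => (0 : ℂ)) 0 0 := hasDerivAt_const _ _
    simpa using hsum.unique (hzero.congr_of_eventuallyEq (.of_forall fun t => by
      simpa using h (t * v)))
  have hone := hline 1
  have hI := hline I
  simp only [map_one, conj_I] at hone hI
  have h2 : 2 * R 0 = 0 := by linear_combination hone + I * hI + (R 0 - deriv P 0) * I_mul_I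
  simpa using h2

variable {W : Type*} [NormedAddCommGroup W] [NormedSpace ℂ W]

theorem eq_zero_of_sesquilinear_self_eq_zero {β : W →L⋆[ℂ] W →L[ℂ] ℂ}
    (hβ : β.toLinearMap₁₂.SeparatingRight) {φ : W → W} (hφ : Differentiable ℂ φ)
    (h : ∀ z, β z (φ z) = 0) (z : W) : φ z = 0 := by
  refine hβ _ fun η => ?_
  have hline : Differentiable ℂ fun s : ℂ => φ (z + s • η) := hφ.comp (by fun_prop)
  have hzero := eq_zero_of_add_conj_mul_eq_zero
    (((β z).differentiable.comp hline) 0) (((β η).differentiable.comp hline) 0) fun s => by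
      simpa using h (z + s • η)
  simpa using hzero

theorem dense_sesquilinear_self_ne_zero {B : W →L⋆[ℂ] W →L[ℂ] ℂ} {z₀ : W}
    (hz₀ : (B z₀ z₀).re ≠ 0) : Dense {z | (B z z).re ≠ 0} := by
  by_contra hdense
  obtain ⟨z, hz⟩ := not_forall.1 hdense
  have hev : ∀ᶠ y in 𝓝 z, (B y y).re = 0 := by
    simpa [mem_closure_iff_frequently] using hz
  have hadd : Tendsto (fun t : ℝ => z + (t : ℂ) • z₀) (𝓝[≠] 0) (𝓝 z) :=
    tendsto_nhdsWithin_of_tendsto_nhds (Continuous.tendsto' (by fun_prop) _ _ (by simp))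
  have hsub : Tendsto (fun t : ℝ => z - (t : ℂ) • z₀) (𝓝[≠] 0) (𝓝 z) :=
    tendsto_nhdsWithin_of_tendsto_nhds (Continuous.tendsto' (by fun_prop) _ _ (by simp))
  obtain ⟨t, ⟨hplus, hminus⟩, ht⟩ :=
    (((hadd.eventually hev).and (hsub.eventually hev)).and self_mem_nhdsWithin).exists
  have hparallelogram : (B (z + (t : ℂ) • z₀) (z + (t : ℂ) • z₀)).re +
      (B (z - (t : ℂ) • z₀) (z - (t : ℂ) • z₀)).re =
      2 * (B z z).re + 2 * (t ^ 2 * (B z₀ z₀).re) := by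
    simp only [map_add, map_sub, map_smulₛₗ, RingHom.id_apply, _root_.add_apply,
      _root_.sub_apply, _root_.smul_apply, conj_ofReal, smul_eq_mul, add_re, sub_re, re_ofReal_mul]
    ring
  rw [hplus, hminus, hev.self_of_nhds] at hparallelogram
  have ht2 : t ^ 2 ≠ 0 := pow_ne_zero 2 ht
  exact mul_ne_zero ht2 hz₀ (by linarith)

section Homogeneous

variable {Q : W → ℝ} {β : W →L⋆[ℂ] W →L[ℂ] ℂ} {f : ℕ → ℕ → W → W} {g : ℕ → ℕ → W → ℂ} {m : ℕ}

theorem solvesModelEquation_of_homogeneous (hQ : ∀ (ζ : ℂ) z, ‖ζ‖ = 1 → Q (ζ • z) = Q z)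
    (hf : ∀ i j (ζ : ℂ) z, f i j (ζ • z) = ζ ^ i • f i j z)
    (hg : ∀ i j (ζ : ℂ) z, g i j (ζ • z) = ζ ^ i • g i j z)
    (heq : ∀ z (u : ℝ),
      (∑ x ∈ weightedBidegrees (m + 1), (u + Q z * I) ^ x.2 • g x.1 x.2 z).im =
        2 * (β z (∑ x ∈ weightedBidegrees m, (u + Q z * I : ℂ) ^ x.2 • f x.1 x.2 z)).re)
    (z : W) :
    SolvesModelEquation (Q z) m (fun i j => β z (f i j z)) fun i j => g i j z := by
  intro u ζ hζ
  have hcircle := heq (ζ • z) u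
  simp only [hQ ζ z hζ, hf, hg, map_smulₛₗ, RingHom.id_apply, _root_.smul_apply, map_sum,
    smul_eq_mul] at hcircle
  simpa only [weightedPolynomial, eval_finsetSum, eval_mul, eval_C, eval_pow, eval_X,
    Finset.mul_sum, mul_assoc, mul_comm, mul_left_comm] using hcircle

theorem eq_zero_of_homogeneous_model_equation (hQ : ∀ (ζ : ℂ) z, ‖ζ‖ = 1 → Q (ζ • z) = Q z)
    (hQ0 : Dense {z | Q z ≠ 0}) (hβ : β.toLinearMap₁₂.SeparatingRight)
    (hf : ∀ i j (ζ : ℂ) z, f i j (ζ • z) = ζ ^ i • f i j z)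
    (hg : ∀ i j (ζ : ℂ) z, g i j (ζ • z) = ζ ^ i • g i j z)
    (hfd : ∀ i j, Differentiable ℂ (f i j)) (hgc : ∀ i j, Continuous (g i j))
    (hf2 : ∀ i j, i + j ≤ 2 → f i j = 0) (hg2 : ∀ i j, i + j ≤ 2 → g i j = 0) (hm : 1 ≤ m)
    (heq : ∀ z (u : ℝ),
      (∑ x ∈ weightedBidegrees (m + 1), (u + Q z * I) ^ x.2 • g x.1 x.2 z).im =
        2 * (β z (∑ x ∈ weightedBidegrees m, (u + Q z * I : ℂ) ^ x.2 • f x.1 x.2 z)).re) :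
    (∀ i j, i + 2 * j = m → f i j = 0) ∧ ∀ i j, i + 2 * j = m + 1 → g i j = 0 := by
  have hsolves := solvesModelEquation_of_homogeneous hQ hf hg heq
  have ha : ∀ z i j, i + j ≤ 2 → β z (f i j z) = 0 := fun z i j hij => by simp [hf2 i j hij]
  have hb : ∀ z i j, i + j ≤ 2 → g i j z = 0 := fun z i j hij => by simp [hg2 i j hij]
  refine ⟨fun i j hij => funext (eq_zero_of_sesquilinear_self_eq_zero hβ (hfd i j) ?_),
    fun i j hij => (hgc i j).ext_on hQ0 continuous_const fun z hz =>
      (hsolves z).right_eq_zero hz hm (ha z) (hb z) hij⟩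
  have hβf : Continuous fun z => β z (f i j z) := β.continuous.clm_apply (hfd i j).continuous
  exact congrFun (hβf.ext_on hQ0 continuous_const fun z hz =>
    (hsolves z).left_eq_zero hz (ha z) hij)

end Homogeneous

end VectorModelEquation

section WeightedExpansion

open Polynomial
open Finset.HasAntidiagonal (antidiagonal mem_antidiagonal)
open scoped Topology

variable {W Y : Type*} [NormedAddCommGroup W] [NormedSpace ℂ W] [NormedAddCommGroup Y]
  [NormedSpace ℂ Y]

theorem apply_const_add_eq_sum_changeOriginSeries {𝕜 E Y : Type*} [NontriviallyNormedField 𝕜]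
    [NormedAddCommGroup E] [NormedSpace 𝕜 E] [NormedAddCommGroup Y] [NormedSpace 𝕜 Y]
    (p : FormalMultilinearSeries 𝕜 E Y) (n : ℕ) (x y : E) :
    p n (fun _ => x + y) = ∑ k ∈ antidiagonal n,
      p.changeOriginSeries k.2 k.1 (fun _ => x) fun _ => y := by
  have hexpand := (p n).toMultilinearMap.map_add_univ (fun _ => x) (fun _ => y)
  rw [← Finset.powerset_univ, Finset.sum_powerset, Finset.card_univ, Fintype.card_fin] at hexpand
  refine hexpand.trans ?_
  rw [Finset.Nat.sum_antidiagonal_eq_sum_range_succ_mk]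
  refine Finset.sum_congr rfl fun i hi => ?_
  obtain ⟨j, rfl⟩ := Nat.exists_eq_add_of_le' (Finset.mem_range_succ_iff.1 hi)
  rw [add_tsub_cancel_right]
  simp only [FormalMultilinearSeries.changeOriginSeries, _root_.sum_apply,
    FormalMultilinearSeries.changeOriginSeriesTerm_apply]
  exact Finset.sum_subtype _ (fun s => by simp [Finset.mem_powersetCard]) _

/-- The part of bidegree `(i, j)` in `(z, w)` of a formal power series on `W × ℂ`, divided by
`w ^ j`. -/
noncomputable def bidegreeCoeff (p : FormalMultilinearSeries ℂ (W × ℂ) Y) (i j : ℕ) (z : W) : Y :=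
  p.changeOriginSeries j i (fun _ => (z, 0)) fun _ => (0, 1)

theorem bidegreeCoeff_smul (p : FormalMultilinearSeries ℂ (W × ℂ) Y) (i j : ℕ) (ζ : ℂ) (z : W) :
    bidegreeCoeff p i j (ζ • z) = ζ ^ i • bidegreeCoeff p i j z := by
  have hsmul := (p.changeOriginSeries j i).map_smul_univ (fun _ => ζ) fun _ => (z, 0)
  simp only [Prod.smul_mk, smul_zero, Finset.prod_const, Finset.card_univ, Fintype.card_fin]
    at hsmul
  rw [bidegreeCoeff, hsmul, _root_.smul_apply, bidegreeCoeff]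

theorem differentiable_bidegreeCoeff (p : FormalMultilinearSeries ℂ (W × ℂ) Y) (i j : ℕ) :
    Differentiable ℂ (bidegreeCoeff p i j) := by
  have hseries : Differentiable ℂ (p.changeOriginSeries j i) :=
    ((p.changeOriginSeries j i).contDiff (n := 1)).differentiable one_ne_zero
  have happly := (ContinuousMultilinearMap.apply ℂ (fun _ : Fin j => W × ℂ) Y
    fun _ => (0, 1)).differentiable
  exact happly.comp (hseries.comp (by fun_prop))

theorem apply_const_eq_sum_bidegreeCoeff (p : FormalMultilinearSeries ℂ (W × ℂ) Y) (n : ℕ)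
    (z : W) (w : ℂ) :
    p n (fun _ => (z, w)) =
      ∑ x ∈ antidiagonal n, w ^ x.2 • bidegreeCoeff p x.1 x.2 z := by
  have hadd := apply_const_add_eq_sum_changeOriginSeries p n ((z, 0) : W × ℂ) (w • (0, 1))
  simp only [Prod.smul_mk, smul_zero, smul_eq_mul, mul_one, Prod.mk_add_mk, add_zero, zero_add]
    at hadd
  rw [hadd]
  refine Finset.sum_congr rfl fun x _ => ?_
  have hsmul := (p.changeOriginSeries x.2 x.1 fun _ => (z, 0)).map_smul_univ (fun _ => w)
    fun _ => (0, 1)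
  simpa [bidegreeCoeff] using hsmul

theorem eq_zero_of_sum_antidiagonal_pow_smul_eq_zero {n : ℕ} {v : ℕ × ℕ → Y}
    (h : ∀ w : ℂ, ∑ x ∈ antidiagonal n, w ^ x.2 • v x = 0) {x : ℕ × ℕ}
    (hx : x ∈ antidiagonal n) : v x = 0 := by
  refine (Module.forall_dual_apply_eq_zero_iff ℂ _).1 fun φ => ?_
  have hpoly : ∑ x ∈ antidiagonal n, C (φ (v x)) * X ^ x.2 = 0 :=
    Polynomial.funext fun w => by
      simpa only [eval_finsetSum, eval_mul, eval_C, eval_pow, eval_X, eval_zero, map_sum, map_smul,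
        smul_eq_mul, map_zero, mul_comm] using congrArg φ (h w)
  have hcoeff := congrArg (coeff · x.2) hpoly
  simp only [finsetSum_coeff, coeff_C_mul, coeff_X_pow, coeff_zero] at hcoeff
  rw [Finset.sum_eq_single_of_mem x hx fun y hy hne => ?_] at hcoeff
  · simpa using hcoeff
  · rw [if_neg fun h2 => hne (Finset.HasAntidiagonal.antidiagonal_congr' hy hx |>.2 h2.symm),
      mul_zero]

theorem bidegreeCoeff_eq_zero_of_apply_const {p : FormalMultilinearSeries ℂ (W × ℂ) Y} {i j : ℕ}
    (h : ∀ y, p (i + j) (fun _ => y) = 0) : bidegreeCoeff p i j = 0 :=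
  funext fun z => eq_zero_of_sum_antidiagonal_pow_smul_eq_zero (n := i + j)
    (v := fun x => bidegreeCoeff p x.1 x.2 z)
    (fun w => by rw [← apply_const_eq_sum_bidegreeCoeff, h])
    (x := (i, j)) (mem_antidiagonal.2 rfl)

theorem bidegreeCoeff_eq_zero_of_iteratedFDeriv_eq_zero [CompleteSpace Y] {D : W × ℂ → Y}
    {p : FormalMultilinearSeries ℂ (W × ℂ) Y} (hp : HasFPowerSeriesAt D p 0) {i j : ℕ}
    (h : iteratedFDeriv ℂ (i + j) D 0 = 0) : bidegreeCoeff p i j = 0 := by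
  obtain ⟨r, hr⟩ := hp
  refine bidegreeCoeff_eq_zero_of_apply_const fun y => ?_
  have hfactorial := hr.factorial_smul y (i + j)
  rw [h, ← Nat.cast_smul_eq_nsmul ℂ] at hfactorial
  exact (smul_eq_zero.1 hfactorial).resolve_left (Nat.cast_ne_zero.2 (Nat.factorial_ne_zero _))

theorem eventually_eq_zero_of_bidegreeCoeff_eq_zero {D : W × ℂ → Y}
    {p : FormalMultilinearSeries ℂ (W × ℂ) Y} (hp : HasFPowerSeriesAt D p 0)
    (h : ∀ i j, bidegreeCoeff p i j = 0) : ∀ᶠ x in 𝓝 0, D x = 0 := by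
  filter_upwards [hp.eventually_hasSum] with x hx
  rw [zero_add] at hx
  refine hx.unique ?_
  have hzero : ∀ n, p n (fun _ => x) = 0 := fun n => by
    simpa [h] using apply_const_eq_sum_bidegreeCoeff p n x.1 x.2
  simpa only [hzero] using hasSum_zero

theorem sum_antidiagonal_ite_eq_sum_weightedBidegrees {M : Type*} [AddCommMonoid M]
    (F : ℕ × ℕ → M) (m : ℕ) :
    ∑ n ∈ Finset.range (m + 1), ∑ x ∈ antidiagonal n,
      (if x.1 + 2 * x.2 = m then F x else 0) = ∑ x ∈ weightedBidegrees m, F x := by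
  rw [← Finset.sum_fiberwise_of_maps_to (s := weightedBidegrees m)
    (t := Finset.range (m + 1)) (g := fun x => x.1 + x.2)]
  · refine Finset.sum_congr rfl fun n _ => ?_
    rw [← Finset.sum_filter]
    refine Finset.sum_congr (Finset.ext fun x => ?_) fun _ _ => rfl
    simp only [Finset.mem_filter, mem_antidiagonal, mem_weightedBidegrees]
    lia
  · intro x hx
    rw [mem_weightedBidegrees] at hx
    simp only [Finset.mem_range]
    lia

end WeightedExpansion

section ParabolicCurves

open Asymptotics Filter Complex
open scoped Topology

variable {W Y : Type*} [NormedAddCommGroup W] [NormedSpace ℂ W] [NormedAddCommGroup Y]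
  [NormedSpace ℂ Y]

theorem tendsto_ofReal_nhdsGT_zero : Tendsto (fun t : ℝ => (t : ℂ)) (𝓝[>] 0) (𝓝 0) :=
  tendsto_nhdsWithin_of_tendsto_nhds (continuous_ofReal.tendsto' _ _ ofReal_zero)

theorem eventually_ofReal_ne_zero : ∀ᶠ t : ℝ in 𝓝[>] 0, (t : ℂ) ≠ 0 := by
  filter_upwards [self_mem_nhdsWithin] with t ht
  exact ofReal_ne_zero.2 (ne_of_gt ht)

theorem isBigO_pow_of_tendsto_inv_pow_smul {X : ℝ → Y} {m : ℕ} {v : Y}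
    (h : Tendsto (fun t : ℝ => ((t : ℂ) ^ m)⁻¹ • X t) (𝓝[>] 0) (𝓝 v)) :
    X =O[𝓝[>] 0] fun t => t ^ m := by
  have hpow : (fun t : ℝ => (t : ℂ) ^ m) =O[𝓝[>] 0] fun t => t ^ m :=
    isBigO_of_le _ fun t => by simp
  refine (hpow.smul (h.isBigO_one ℝ)).congr' ?_ (.of_forall fun t => by simp)
  filter_upwards [eventually_ofReal_ne_zero] with t ht
  exact smul_inv_smul₀ (pow_ne_zero m ht) _

theorem isBigO_id_of_tendsto_inv_smul {X : ℝ → Y} {v : Y}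
    (h : Tendsto (fun t : ℝ => (t : ℂ)⁻¹ • X t) (𝓝[>] 0) (𝓝 v)) :
    X =O[𝓝[>] 0] fun t => t := by
  simpa using isBigO_pow_of_tendsto_inv_pow_smul (m := 1) (by simpa using h)

theorem tendsto_zero_of_tendsto_inv_smul {X : ℝ → Y} {v : Y}
    (h : Tendsto (fun t : ℝ => (t : ℂ)⁻¹ • X t) (𝓝[>] 0) (𝓝 v)) :
    Tendsto X (𝓝[>] 0) (𝓝 0) :=
  (isBigO_id_of_tendsto_inv_smul h).trans_tendsto (tendsto_nhdsWithin_of_tendsto_nhds tendsto_id)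

/-- The curve `t ↦ (t z, t² ω t)`, adapted to the weights one of `z` and two of `w`. A variable
`ω` lets the curve follow a hypersurface that is only asymptotic to the model quadric. -/
noncomputable def parabolicCurve (z : W) (ω : ℝ → ℂ) (t : ℝ) : W × ℂ :=
  ((t : ℂ) • z, (t : ℂ) ^ 2 * ω t)

theorem tendsto_inv_smul_parabolicCurve {ω : ℝ → ℂ} {w : ℂ} (hω : Tendsto ω (𝓝[>] 0) (𝓝 w))
    (z : W) :
    Tendsto (fun t : ℝ => (t : ℂ)⁻¹ • parabolicCurve z ω t) (𝓝[>] 0) (𝓝 (z, 0)) := by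
  have hlim : Tendsto (fun t : ℝ => (z, (t : ℂ) * ω t)) (𝓝[>] 0) (𝓝 (z, 0)) := by
    simpa using tendsto_const_nhds.prodMk_nhds (tendsto_ofReal_nhdsGT_zero.mul hω)
  refine hlim.congr' ?_
  filter_upwards [eventually_ofReal_ne_zero] with t ht
  rw [parabolicCurve, Prod.smul_mk, inv_smul_smul₀ ht, smul_eq_mul, sq, mul_assoc,
    inv_mul_cancel_left₀ ht]

theorem tendsto_parabolicCurve {ω : ℝ → ℂ} {w : ℂ} (hω : Tendsto ω (𝓝[>] 0) (𝓝 w)) (z : W) :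
    Tendsto (parabolicCurve z ω) (𝓝[>] 0) (𝓝 0) :=
  tendsto_zero_of_tendsto_inv_smul (tendsto_inv_smul_parabolicCurve hω z)

theorem tendsto_inv_smul_apply_parabolicCurve {G : W × ℂ → Y} (hG : DifferentiableAt ℂ G 0)
    (hG0 : G 0 = 0) {ω : ℝ → ℂ} {w : ℂ} (hω : Tendsto ω (𝓝[>] 0) (𝓝 w)) (z : W) :
    Tendsto (fun t : ℝ => (t : ℂ)⁻¹ • G (parabolicCurve z ω t)) (𝓝[>] 0)
      (𝓝 (fderiv ℂ G 0 (z, 0))) := by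
  simpa [hG0] using hG.hasFDerivAt.hasFDerivWithinAt (s := Set.univ) |>.lim
    (tendsto_parabolicCurve hω z) (by simp) (tendsto_inv_smul_parabolicCurve hω z)

theorem isBigO_sub_partialSum_parabolicCurve {D : W × ℂ → Y}
    {p : FormalMultilinearSeries ℂ (W × ℂ) Y} (hp : HasFPowerSeriesAt D p 0) {ω : ℝ → ℂ} {w : ℂ}
    (hω : Tendsto ω (𝓝[>] 0) (𝓝 w)) (z : W) (n : ℕ) :
    (fun t => D (parabolicCurve z ω t) - p.partialSum n (parabolicCurve z ω t)) =O[𝓝[>] 0]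
      fun t : ℝ => (t : ℂ) ^ n := by
  have hrem := (hp.isBigO_sub_partialSum_pow n).comp_tendsto (tendsto_parabolicCurve hω z)
  have hcurve := isBigO_id_of_tendsto_inv_smul (tendsto_inv_smul_parabolicCurve hω z)
  refine (hrem.congr_left fun t => by simp).trans ((hcurve.norm_left.pow n).trans ?_)
  exact isBigO_of_le _ fun t => by simp

theorem tendsto_inv_pow_smul_monomial {ω : ℝ → ℂ} {w : ℂ} (hω : Tendsto ω (𝓝[>] 0) (𝓝 w)) (c : Y)
    {i j m : ℕ} (hij : m ≤ i + 2 * j) :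
    Tendsto (fun t : ℝ => ((t : ℂ) ^ m)⁻¹ • ((t : ℂ) ^ 2 * ω t) ^ j • (t : ℂ) ^ i • c) (𝓝[>] 0)
      (𝓝 (if i + 2 * j = m then w ^ j • c else 0)) := by
  obtain ⟨k, hk⟩ := exists_add_of_le hij
  have hlim := ((tendsto_ofReal_nhdsGT_zero.pow k).mul (hω.pow j)).smul_const c
  rw [zero_pow_eq, ite_mul, ite_smul, one_mul, zero_mul, zero_smul] at hlim
  simp only [hk, add_eq_left]
  refine hlim.congr' ?_
  filter_upwards [eventually_ofReal_ne_zero] with t ht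
  have hpow : (t : ℂ) ^ i * ((t : ℂ) ^ 2) ^ j = (t : ℂ) ^ m * (t : ℂ) ^ k := by
    rw [← pow_mul, ← pow_add, ← pow_add, hk]
  rw [smul_smul, smul_smul]
  congr 1
  field_simp
  linear_combination -(ω t ^ j) * hpow

theorem tendsto_inv_pow_smul_partialSum_parabolicCurve {p : FormalMultilinearSeries ℂ (W × ℂ) Y}
    {m : ℕ} (hm : ∀ i j, i + 2 * j < m → bidegreeCoeff p i j = 0) {ω : ℝ → ℂ} {w : ℂ}
    (hω : Tendsto ω (𝓝[>] 0) (𝓝 w)) (z : W) :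
    Tendsto (fun t : ℝ => ((t : ℂ) ^ m)⁻¹ • p.partialSum (m + 1) (parabolicCurve z ω t)) (𝓝[>] 0)
      (𝓝 (∑ x ∈ weightedBidegrees m, w ^ x.2 • bidegreeCoeff p x.1 x.2 z)) := by
  rw [← sum_antidiagonal_ite_eq_sum_weightedBidegrees]
  simp only [FormalMultilinearSeries.partialSum, parabolicCurve, apply_const_eq_sum_bidegreeCoeff,
    Finset.smul_sum, bidegreeCoeff_smul]
  refine tendsto_finsetSum _ fun n _ => tendsto_finsetSum _ fun x _ => ?_
  rcases lt_or_ge (x.1 + 2 * x.2) m with hlt | hge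
  · simp [hm _ _ hlt]
  · exact tendsto_inv_pow_smul_monomial hω _ hge

theorem tendsto_inv_pow_smul_apply_parabolicCurve {D : W × ℂ → Y}
    {p : FormalMultilinearSeries ℂ (W × ℂ) Y} (hp : HasFPowerSeriesAt D p 0) {m : ℕ}
    (hm : ∀ i j, i + 2 * j < m → bidegreeCoeff p i j = 0) {ω : ℝ → ℂ} {w : ℂ}
    (hω : Tendsto ω (𝓝[>] 0) (𝓝 w)) (z : W) :
    Tendsto (fun t : ℝ => ((t : ℂ) ^ m)⁻¹ • D (parabolicCurve z ω t)) (𝓝[>] 0)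
      (𝓝 (∑ x ∈ weightedBidegrees m, w ^ x.2 • bidegreeCoeff p x.1 x.2 z)) := by
  have hrem : Tendsto (fun t : ℝ => ((t : ℂ) ^ m)⁻¹ •
      (D (parabolicCurve z ω t) - p.partialSum (m + 1) (parabolicCurve z ω t))) (𝓝[>] 0)
      (𝓝 0) := by
    refine ((isBigO_refl (fun t : ℝ => ((t : ℂ) ^ m)⁻¹) _).smul
      (isBigO_sub_partialSum_parabolicCurve hp hω z (m + 1))).trans_tendsto
      (tendsto_ofReal_nhdsGT_zero.congr' ?_)
    filter_upwards [eventually_ofReal_ne_zero] with t ht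
    rw [smul_eq_mul, pow_succ, inv_mul_cancel_left₀ (pow_ne_zero m ht)]
  rw [← zero_add (∑ x ∈ weightedBidegrees m, _)]
  refine (hrem.add (tendsto_inv_pow_smul_partialSum_parabolicCurve hm hω z)).congr fun t => ?_
  rw [← smul_add, sub_add_cancel]

end ParabolicCurves

section SecondOrderVanishing

open Asymptotics Filter
open scoped Topology

variable {E : Type*} [NormedAddCommGroup E] {h : E → ℝ}

/-- `h` vanishes to second order at `0`. This is encoded by an estimate for differences, which is
what a comparison of two nearby points of the graph of `h` requires. -/
structure VanishesToSecondOrder (h : E → ℝ) : Prop where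
  apply_zero : h 0 = 0
  isLittleO_sub : (fun p : E × E => h p.1 - h p.2) =o[𝓝 0] fun p => ‖p‖ * ‖p.1 - p.2‖

namespace VanishesToSecondOrder

theorem isLittleO_comp_sub_comp (hh : VanishesToSecondOrder h) {x y : ℝ → E} {m : ℕ}
    (hx : x =O[𝓝[>] 0] fun t => t) (hy : y =O[𝓝[>] 0] fun t => t)
    (hxy : (fun t => x t - y t) =O[𝓝[>] 0] fun t => t ^ m) :
    (fun t => h (x t) - h (y t)) =o[𝓝[>] 0] fun t => t ^ (m + 1) := by
  have hpair := hx.prod_left hy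
  have hlim := hpair.trans_tendsto (tendsto_nhdsWithin_of_tendsto_nhds tendsto_id)
  refine (hh.isLittleO_sub.comp_tendsto hlim).trans_isBigO ?_
  exact (hpair.norm_left.mul hxy.norm_left).congr (fun _ => rfl) fun t => (pow_succ' t m).symm

theorem isLittleO_comp (hh : VanishesToSecondOrder h) {x : ℝ → E}
    (hx : x =O[𝓝[>] 0] fun t => t) : (fun t => h (x t)) =o[𝓝[>] 0] fun t => t ^ 2 := by
  simpa [hh.apply_zero] using
    hh.isLittleO_comp_sub_comp (m := 1) hx (isBigO_zero _ _) (by simpa using hx)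

end VanishesToSecondOrder

variable [NormedSpace ℝ E]

theorem isLittleO_fderiv_of_iteratedFDeriv_eq_zero (hh : ContDiffAt ℝ 2 h 0)
    (h1 : iteratedFDeriv ℝ 1 h 0 = 0) (h2 : iteratedFDeriv ℝ 2 h 0 = 0) :
    fderiv ℝ h =o[𝓝 0] fun x : E => x := by
  have hfirst : fderiv ℝ h 0 = 0 := by
    ext v
    simpa [iteratedFDeriv_one_apply] using congrArg (fun q => q fun _ => v) h1
  have hsecond : fderiv ℝ (fderiv ℝ h) 0 = 0 := by
    ext u v
    simpa [iteratedFDeriv_two_apply] using congrArg (fun q => q ![u, v]) h2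
  have hdiff : DifferentiableAt ℝ (fderiv ℝ h) 0 :=
    (hh.fderiv_right (m := 1) le_rfl).differentiableAt one_ne_zero
  simpa [hfirst, hsecond] using hdiff.hasFDerivAt.isLittleO

theorem isLittleO_sub_of_isLittleO_fderiv (hd : ∀ᶠ x in 𝓝 0, DifferentiableAt ℝ h x)
    (hfderiv : fderiv ℝ h =o[𝓝 0] fun x : E => x) :
    (fun p : E × E => h p.1 - h p.2) =o[𝓝 0] fun p => ‖p‖ * ‖p.1 - p.2‖ := by
  refine isLittleO_iff.2 fun c hc => ?_
  obtain ⟨δ, hδ, hball⟩ := Metric.eventually_nhds_iff_ball.1 ((isLittleO_iff.1 hfderiv hc).and hd)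
  filter_upwards [Metric.ball_mem_nhds (0 : E × E) hδ] with p hp
  have hsub : Metric.closedBall (0 : E) ‖p‖ ⊆ Metric.ball 0 δ :=
    Metric.closedBall_subset_ball (mem_ball_zero_iff.1 hp)
  have hmean := (convex_closedBall (0 : E) ‖p‖).norm_image_sub_le_of_norm_fderiv_le (𝕜 := ℝ)
    (f := h) (C := c * ‖p‖) (x := p.2) (y := p.1)
    (fun x hx => (hball x (hsub hx)).2)
    (fun x hx => (hball x (hsub hx)).1.trans
      (mul_le_mul_of_nonneg_left (mem_closedBall_zero_iff.1 hx) hc.le))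
    (mem_closedBall_zero_iff.2 (norm_snd_le p)) (mem_closedBall_zero_iff.2 (norm_fst_le p))
  rwa [norm_mul, norm_norm, norm_norm, ← mul_assoc]

theorem VanishesToSecondOrder.of_iteratedFDeriv_eq_zero (hh : ContDiffAt ℝ 2 h 0) (h0 : h 0 = 0)
    (h1 : iteratedFDeriv ℝ 1 h 0 = 0) (h2 : iteratedFDeriv ℝ 2 h 0 = 0) :
    VanishesToSecondOrder h :=
  ⟨h0, isLittleO_sub_of_isLittleO_fderiv
    ((hh.eventually (by simp)).mono fun _ hx => hx.differentiableAt two_ne_zero)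
    (isLittleO_fderiv_of_iteratedFDeriv_eq_zero hh h1 h2)⟩

end SecondOrderVanishing

section LeviGraph

open Asymptotics Filter Complex
open scoped Topology

theorem isBigO_fst_re_snd {W : Type*} [NormedAddCommGroup W] {X : ℝ → W × ℂ} {l : Filter ℝ}
    {g : ℝ → ℝ} (hX : X =O[l] g) : (fun t => ((X t).1, (X t).2.re)) =O[l] g :=
  (isBigO_of_le _ fun _ => max_le_max le_rfl (abs_re_le_norm _)).trans hX

variable {W : Type*} [NormedAddCommGroup W] [NormedSpace ℂ W] {B : W →L⋆[ℂ] W →L[ℂ] ℂ}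
  {h : W × ℝ → ℝ} {X Y : ℝ → W × ℂ} {m : ℕ}

/-- The hypersurface `Im w = Re B(z, z) + h(z, Re w)`. The real part is redundant for a Hermitian
form `B`. -/
def leviGraph (B : W →L⋆[ℂ] W →L[ℂ] ℂ) (h : W × ℝ → ℝ) : Set (W × ℂ) :=
  {p | p.2.im = (B p.1 p.1).re + h (p.1, p.2.re)}

theorem mem_leviGraph {p : W × ℂ} :
    p ∈ leviGraph B h ↔ p.2.im = (B p.1 p.1).re + h (p.1, p.2.re) := Iff.rfl

theorem re_sesquilinear_smul_self (B : W →L⋆[ℂ] W →L[ℂ] ℂ) (ζ : ℂ) (z : W) :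
    (B (ζ • z) (ζ • z)).re = ‖ζ‖ ^ 2 * (B z z).re := by
  rw [map_smul, map_smulₛₗ, _root_.smul_apply, smul_eq_mul, smul_eq_mul, ← mul_assoc, mul_conj,
    re_ofReal_mul, normSq_eq_norm_sq]

theorem re_sesquilinear_add_self (hB : B.toLinearMap₁₂.IsSymm) (z y : W) :
    (B (z + y) (z + y)).re = (B z z).re + 2 * (B z y).re + (B y y).re := by
  have hsymm : (B y z).re = (B z y).re := (congrArg re (hB.eq z y)).symm.trans (conj_re _)
  simp only [map_add, _root_.add_apply, add_re, hsymm]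
  ring

theorem isBigO_re_sesquilinear_self (B : W →L⋆[ℂ] W →L[ℂ] ℂ) {y : ℝ → W} {l : Filter ℝ}
    {g : ℝ → ℝ} (hy : y =O[l] g) : (fun t => (B (y t) (y t)).re) =O[l] fun t => g t ^ 2 := by
  have hbound : (fun t => (B (y t) (y t)).re) =O[l] fun t => ‖y t‖ ^ 2 :=
    IsBigO.of_bound ‖B‖ (.of_forall fun t => by
      simpa [sq, mul_assoc] using (abs_re_le_norm _).trans (B.le_opNorm₂ (y t) (y t)))
  exact hbound.trans (hy.norm_left.pow 2)

theorem exists_parabolicCurve_mem_leviGraph (hh : VanishesToSecondOrder h)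
    (B : W →L⋆[ℂ] W →L[ℂ] ℂ) (z : W) (u : ℝ) :
    ∃ ω : ℝ → ℂ, Tendsto ω (𝓝[>] 0) (𝓝 (u + (B z z).re * I)) ∧
      ∀ᶠ t : ℝ in 𝓝[>] 0, parabolicCurve z ω t ∈ leviGraph B h := by
  let y : ℝ → W × ℝ := fun t => ((parabolicCurve z (fun _ => u) t).1,
    (parabolicCurve z (fun _ => u) t).2.re)
  have hy : y =O[𝓝[>] 0] fun t => t := isBigO_fst_re_snd
    (isBigO_id_of_tendsto_inv_smul (tendsto_inv_smul_parabolicCurve tendsto_const_nhds z))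
  refine ⟨fun t => u + (((B z z).re + h (y t) / t ^ 2 : ℝ) : ℂ) * I, ?_, ?_⟩
  · have him : Tendsto (fun t => (B z z).re + h (y t) / t ^ 2) (𝓝[>] 0) (𝓝 (B z z).re) := by
      simpa using tendsto_const_nhds.add (hh.isLittleO_comp hy).tendsto_div_nhds_zero
    exact tendsto_const_nhds.add (((continuous_ofReal.tendsto _).comp him).mul_const I)
  · filter_upwards [self_mem_nhdsWithin] with t ht
    have ht0 : t ≠ 0 := ne_of_gt ht
    have hyt : y t = ((t : ℂ) • z, t ^ 2 * u) := by
      simp only [y, parabolicCurve, ← ofReal_pow, ← ofReal_mul, ofReal_re]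
    simp only [mem_leviGraph, parabolicCurve, ← ofReal_pow, re_sesquilinear_smul_self,
      re_ofReal_mul, im_ofReal_mul, norm_real, Real.norm_eq_abs, sq_abs, add_re, add_im,
      ofReal_re, ofReal_im, I_re, I_im, mul_zero, mul_one, add_zero, zero_add, ← hyt]
    field_simp

theorem im_snd_eq_zero_of_mem_leviGraph (hh : VanishesToSecondOrder h)
    (hY : ∀ᶠ t in 𝓝[>] 0, Y t ∈ leviGraph B h) {v : W × ℂ}
    (hv : Tendsto (fun t : ℝ => (t : ℂ)⁻¹ • Y t) (𝓝[>] 0) (𝓝 v)) : v.2.im = 0 := by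
  have hYO := isBigO_id_of_tendsto_inv_smul hv
  have hsq : (fun t => (Y t).2.im) =O[𝓝[>] 0] fun t => t ^ 2 :=
    ((isBigO_re_sesquilinear_self B (isBigO_fst_prod.trans hYO)).add
      (hh.isLittleO_comp (isBigO_fst_re_snd hYO)).isBigO).congr' (hY.mono fun t ht => ht.symm)
      .rfl
  have hlittle : (fun t => (Y t).2.im) =o[𝓝[>] 0] fun t => t :=
    hsq.trans_isLittleO ((isLittleO_pow_id one_lt_two).mono nhdsWithin_le_nhds)
  have hcont : Continuous fun p : W × ℂ => p.2.im := by fun_prop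
  refine tendsto_nhds_unique ((hcont.tendsto v).comp hv)
    (hlittle.tendsto_div_nhds_zero.congr fun t => ?_)
  simp [← ofReal_inv, div_eq_inv_mul]

theorem isLittleO_im_sub_of_mem_leviGraph (hB : B.toLinearMap₁₂.IsSymm)
    (hh : VanishesToSecondOrder h) (hX : ∀ᶠ t in 𝓝[>] 0, X t ∈ leviGraph B h)
    (hY : ∀ᶠ t in 𝓝[>] 0, Y t ∈ leviGraph B h) (hYO : Y =O[𝓝[>] 0] fun t => t)
    (hXY : (fun t => X t - Y t) =O[𝓝[>] 0] fun t => t ^ m) (hm : 2 ≤ m) :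
    (fun t => (X t - Y t).2.im - 2 * (B (Y t).1 (X t - Y t).1).re) =o[𝓝[>] 0]
      fun t => t ^ (m + 1) := by
  have hXO : X =O[𝓝[>] 0] fun t => t := by
    have hpow : (fun t : ℝ => t ^ m) =O[𝓝[>] 0] fun t => t :=
      ((isLittleO_pow_id (by lia)).mono nhdsWithin_le_nhds).isBigO
    simpa using (hXY.trans hpow).add hYO
  have hquad : (fun t => (B (X t - Y t).1 (X t - Y t).1).re) =o[𝓝[>] 0]
      fun t => t ^ (m + 1) := by
    refine (isBigO_re_sesquilinear_self B (isBigO_fst_prod.trans hXY)).trans_isLittleO ?_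
    simp only [← pow_mul]
    exact (isLittleO_pow_pow (by lia)).mono nhdsWithin_le_nhds
  have hrest := hh.isLittleO_comp_sub_comp (isBigO_fst_re_snd hXO) (isBigO_fst_re_snd hYO)
    (by simpa using isBigO_fst_re_snd hXY)
  refine (hquad.add hrest).congr' ?_ .rfl
  filter_upwards [hX, hY] with t hXt hYt
  have hexpand := re_sesquilinear_add_self hB (Y t).1 (X t - Y t).1
  rw [Prod.fst_sub, add_sub_cancel, ← Prod.fst_sub] at hexpand
  rw [Prod.snd_sub, sub_im, mem_leviGraph.1 hXt, mem_leviGraph.1 hYt, hexpand]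
  ring

theorem im_eq_two_mul_re_of_mem_leviGraph (hB : B.toLinearMap₁₂.IsSymm)
    (hh : VanishesToSecondOrder h) (hX : ∀ᶠ t in 𝓝[>] 0, X t ∈ leviGraph B h)
    (hY : ∀ᶠ t in 𝓝[>] 0, Y t ∈ leviGraph B h) (hm : 2 ≤ m) {v : W × ℂ} {φ : W} {ψ : ℂ}
    (hv : Tendsto (fun t : ℝ => (t : ℂ)⁻¹ • Y t) (𝓝[>] 0) (𝓝 v))
    (hφ : Tendsto (fun t : ℝ => ((t : ℂ) ^ m)⁻¹ • (X t - Y t).1) (𝓝[>] 0) (𝓝 φ))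
    (hψ : Tendsto (fun t : ℝ => ((t : ℂ) ^ (m + 1))⁻¹ • (X t - Y t).2) (𝓝[>] 0) (𝓝 ψ)) :
    ψ.im = 2 * (B v.1 φ).re := by
  have hXY : (fun t => X t - Y t) =O[𝓝[>] 0] fun t => t ^ m :=
    (isBigO_pow_of_tendsto_inv_pow_smul hφ).prod_left
      ((isBigO_pow_of_tendsto_inv_pow_smul hψ).trans
        ((isLittleO_pow_pow m.lt_succ_self).mono nhdsWithin_le_nhds).isBigO)
  have hzero := (isLittleO_im_sub_of_mem_leviGraph hB hh hX hY (isBigO_id_of_tendsto_inv_smul hv)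
    hXY hm).tendsto_div_nhds_zero
  have hBcont : Continuous fun p : W × W => (B p.1 p.2).re := by fun_prop
  have hlim := ((continuous_im.tendsto ψ).comp hψ).sub
    (((hBcont.tendsto (v.1, φ)).comp
      (((continuous_fst.tendsto v).comp hv).prodMk_nhds hφ)).const_mul 2)
  refine sub_eq_zero.1 (tendsto_nhds_unique (hlim.congr fun t => ?_) hzero)
  simp only [Function.comp_apply, Prod.smul_fst, map_smul, map_smulₛₗ, _root_.smul_apply,
    smul_eq_mul, conj_ofReal, ← ofReal_pow, ← ofReal_inv, re_ofReal_mul, im_ofReal_mul]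
  ring

end LeviGraph

section LeviGraphMaps

open Complex
open scoped Topology

theorem surjective_fst_apply_prodMk_zero {𝕜 V : Type*} [Field 𝕜] [AddCommGroup V] [Module 𝕜 V]
    {L : V × 𝕜 →ₗ[𝕜] V × 𝕜} (hL : Function.Surjective L) (hsnd : ∀ v, (L (v, 0)).2 = 0) :
    Function.Surjective fun v => (L (v, 0)).1 := by
  have hsplit : ∀ x : V × 𝕜, L x = L (x.1, 0) + x.2 • L (0, 1) := fun x => by
    rw [← map_smul, ← map_add]
    simp
  have hL2 : ∀ x : V × 𝕜, (L x).2 = x.2 * (L (0, 1)).2 := fun x => by simp [hsplit x, hsnd]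
  have hne : (L (0, 1)).2 ≠ 0 := by
    obtain ⟨x, hx⟩ := hL (0, 1)
    exact fun hzero => one_ne_zero (α := 𝕜) (by simpa [hzero, hx] using hL2 x)
  intro y
  obtain ⟨⟨v, c⟩, hx⟩ := hL (y, 0)
  obtain rfl : c = 0 := by simpa [hx, hne] using hL2 (v, c)
  exact ⟨v, congrArg Prod.fst hx⟩

theorem iteratedFDeriv_comp_sub_eq_zero {𝕜 X Y Z : Type*} [NontriviallyNormedField 𝕜]
    [NormedAddCommGroup X] [NormedSpace 𝕜 X] [NormedAddCommGroup Y] [NormedSpace 𝕜 Y]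
    [NormedAddCommGroup Z] [NormedSpace 𝕜 Z] (L : Y →L[𝕜] Z) {F G : X → Y} {x : X} {k : ℕ}
    (hF : ContDiffAt 𝕜 k F x) (hG : ContDiffAt 𝕜 k G x)
    (h : iteratedFDeriv 𝕜 k F x = iteratedFDeriv 𝕜 k G x) :
    iteratedFDeriv 𝕜 k (fun y => L (F y - G y)) x = 0 := by
  have hcomp := L.iteratedFDeriv_comp_left (f := F - G) (hF.sub hG) le_rfl
  rw [iteratedFDeriv_sub_apply hF hG, h, sub_self] at hcomp
  refine hcomp.trans ?_
  ext v
  simp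

variable {W : Type*} [NormedAddCommGroup W] [NormedSpace ℂ W] {B : W →L⋆[ℂ] W →L[ℂ] ℂ}
  {h : W × ℝ → ℝ} {F G : W × ℂ → W × ℂ}

theorem exists_re_sesquilinear_self_ne_zero [Nontrivial W] (hB : B.toLinearMap₁₂.IsSymm)
    (hBsep : B.toLinearMap₁₂.SeparatingRight) : ∃ z, (B z z).re ≠ 0 := by
  by_contra! hre
  obtain ⟨z, hz⟩ := exists_ne (0 : W)
  exact hz (eq_zero_of_sesquilinear_self_eq_zero hBsep differentiable_id
    (fun z => Complex.ext (hre z) (conj_eq_iff_im.1 (hB.eq z z))) z)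

theorem snd_fderiv_apply_eq_zero (hh : VanishesToSecondOrder h) (hG : DifferentiableAt ℂ G 0)
    (hG0 : G 0 = 0) (hGM : ∀ᶠ p in 𝓝 0, p ∈ leviGraph B h → G p ∈ leviGraph B h) (z : W) :
    (fderiv ℂ G 0 (z, 0)).2 = 0 := by
  have him : ∀ z, (fderiv ℂ G 0 (z, 0)).2.im = 0 := fun z => by
    obtain ⟨ω, hω, hmem⟩ := exists_parabolicCurve_mem_leviGraph hh B z 0
    exact im_snd_eq_zero_of_mem_leviGraph hh
      (((tendsto_parabolicCurve hω z).eventually hGM).mp (hmem.mono fun _ ht hmaps => hmaps ht))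
      (tendsto_inv_smul_apply_parabolicCurve hG hG0 hω z)
  have hI : fderiv ℂ G 0 (I • z, 0) = I • fderiv ℂ G 0 (z, 0) := by
    rw [← map_smul, Prod.smul_mk, smul_zero]
  exact Complex.ext (by simpa [hI] using him (I • z)) (him z)

theorem im_eq_two_mul_re_weightedExpansion (hB : B.toLinearMap₁₂.IsSymm)
    (hh : VanishesToSecondOrder h) (hG : DifferentiableAt ℂ G 0) (hG0 : G 0 = 0)
    (hFM : ∀ᶠ x in 𝓝 0, x ∈ leviGraph B h → F x ∈ leviGraph B h)
    (hGM : ∀ᶠ x in 𝓝 0, x ∈ leviGraph B h → G x ∈ leviGraph B h)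
    {p : FormalMultilinearSeries ℂ (W × ℂ) W} {q : FormalMultilinearSeries ℂ (W × ℂ) ℂ}
    (hp : HasFPowerSeriesAt (fun x => (F x - G x).1) p 0)
    (hq : HasFPowerSeriesAt (fun x => (F x - G x).2) q 0) {m : ℕ} (hm : 2 ≤ m)
    (hpm : ∀ i j, i + 2 * j < m → bidegreeCoeff p i j = 0)
    (hqm : ∀ i j, i + 2 * j < m + 1 → bidegreeCoeff q i j = 0) (z : W) (u : ℝ) :
    (∑ x ∈ weightedBidegrees (m + 1), (u + (B z z).re * I) ^ x.2 • bidegreeCoeff q x.1 x.2 z).im =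
      2 * (B (fderiv ℂ G 0 (z, 0)).1 (∑ x ∈ weightedBidegrees m,
        (u + (B z z).re * I : ℂ) ^ x.2 • bidegreeCoeff p x.1 x.2 z)).re := by
  obtain ⟨ω, hω, hmem⟩ := exists_parabolicCurve_mem_leviGraph hh B z u
  have hcurve := tendsto_parabolicCurve hω z
  exact im_eq_two_mul_re_of_mem_leviGraph hB hh
    ((hcurve.eventually hFM).mp (hmem.mono fun _ ht hmaps => hmaps ht))
    ((hcurve.eventually hGM).mp (hmem.mono fun _ ht hmaps => hmaps ht)) hm
    (tendsto_inv_smul_apply_parabolicCurve hG hG0 hω z)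
    (tendsto_inv_pow_smul_apply_parabolicCurve hp hpm hω z)
    (tendsto_inv_pow_smul_apply_parabolicCurve hq hqm hω z)

theorem bidegreeCoeff_eq_zero_of_mapsTo_leviGraph [CompleteSpace W] [Nontrivial W]
    (hB : B.toLinearMap₁₂.IsSymm) (hBsep : B.toLinearMap₁₂.SeparatingRight)
    (hh : VanishesToSecondOrder h) (hG : DifferentiableAt ℂ G 0) (hG0 : G 0 = 0)
    (hGsurj : Function.Surjective (fderiv ℂ G 0))
    (hFM : ∀ᶠ x in 𝓝 0, x ∈ leviGraph B h → F x ∈ leviGraph B h)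
    (hGM : ∀ᶠ x in 𝓝 0, x ∈ leviGraph B h → G x ∈ leviGraph B h)
    {p : FormalMultilinearSeries ℂ (W × ℂ) W} {q : FormalMultilinearSeries ℂ (W × ℂ) ℂ}
    (hp : HasFPowerSeriesAt (fun x => (F x - G x).1) p 0)
    (hq : HasFPowerSeriesAt (fun x => (F x - G x).2) q 0)
    (hp2 : ∀ i j, i + j ≤ 2 → bidegreeCoeff p i j = 0)
    (hq2 : ∀ i j, i + j ≤ 2 → bidegreeCoeff q i j = 0) :
    (∀ i j, bidegreeCoeff p i j = 0) ∧ ∀ i j, bidegreeCoeff q i j = 0 := by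
  obtain ⟨z₀, hz₀⟩ := exists_re_sesquilinear_self_ne_zero hB hBsep
  let C : W →L[ℂ] W := .fst ℂ W ℂ ∘L fderiv ℂ G 0 ∘L .inl ℂ W ℂ
  have hC : Function.Surjective C :=
    surjective_fst_apply_prodMk_zero (L := (fderiv ℂ G 0).toLinearMap) hGsurj
      (snd_fderiv_apply_eq_zero hh hG hG0 hGM)
  have hβ : (B.comp C).toLinearMap₁₂.SeparatingRight := fun y hy =>
    hBsep y (hC.forall.2 hy)
  have hweight : ∀ m, (∀ i j, i + 2 * j < m + 2 → bidegreeCoeff p i j = 0) ∧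
      ∀ i j, i + 2 * j < m + 2 + 1 → bidegreeCoeff q i j = 0 := by
    intro m
    induction m with
    | zero => exact ⟨fun i j _ => hp2 i j (by lia), fun i j _ => hq2 i j (by lia)⟩
    | succ m ih =>
      have hstep := eq_zero_of_homogeneous_model_equation (Q := fun z => (B z z).re)
        (fun ζ z hζ => by rw [re_sesquilinear_smul_self, hζ, one_pow, one_mul])
        (dense_sesquilinear_self_ne_zero hz₀) hβ (bidegreeCoeff_smul p) (bidegreeCoeff_smul q)
        (differentiable_bidegreeCoeff p)
        (fun i j => (differentiable_bidegreeCoeff q i j).continuous) hp2 hq2 (by lia)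
        (im_eq_two_mul_re_weightedExpansion hB hh hG hG0 hFM hGM hp hq (by lia) ih.1 ih.2)
      exact ⟨fun i j hij => (Nat.lt_succ_iff_lt_or_eq.1 hij).elim (ih.1 i j) (hstep.1 i j),
        fun i j hij => (Nat.lt_succ_iff_lt_or_eq.1 hij).elim (ih.2 i j) (hstep.2 i j)⟩
  exact ⟨fun i j => (hweight (i + 2 * j)).1 i j (by lia),
    fun i j => (hweight (i + 2 * j)).2 i j (by lia)⟩

theorem chern_moser_finite_jet_determination_general [CompleteSpace W] [Nontrivial W]
    (hB : B.toLinearMap₁₂.IsSymm) (hBsep : B.toLinearMap₁₂.SeparatingRight)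
    (hh : ContDiffAt ℝ 2 h 0) (h0 : h 0 = 0) (h1 : iteratedFDeriv ℝ 1 h 0 = 0)
    (h2 : iteratedFDeriv ℝ 2 h 0 = 0) (hF : AnalyticAt ℂ F 0) (hG : AnalyticAt ℂ G 0)
    (hG0 : G 0 = 0) (hGsurj : Function.Surjective (fderiv ℂ G 0))
    (hFM : ∀ᶠ x in 𝓝 0, x ∈ leviGraph B h → F x ∈ leviGraph B h)
    (hGM : ∀ᶠ x in 𝓝 0, x ∈ leviGraph B h → G x ∈ leviGraph B h)
    (hjet : ∀ k ≤ 2, iteratedFDeriv ℂ k F 0 = iteratedFDeriv ℂ k G 0) : F =ᶠ[𝓝 0] G := by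
  have hvanish := VanishesToSecondOrder.of_iteratedFDeriv_eq_zero hh h0 h1 h2
  obtain ⟨p, hp⟩ := (ContinuousLinearMap.fst ℂ W ℂ).analyticAt _ |>.comp (hF.sub hG)
  obtain ⟨q, hq⟩ := (ContinuousLinearMap.snd ℂ W ℂ).analyticAt _ |>.comp (hF.sub hG)
  have hp2 : ∀ i j, i + j ≤ 2 → bidegreeCoeff p i j = 0 := fun i j hij =>
    bidegreeCoeff_eq_zero_of_iteratedFDeriv_eq_zero hp
      (iteratedFDeriv_comp_sub_eq_zero _ hF.contDiffAt hG.contDiffAt (hjet _ hij))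
  have hq2 : ∀ i j, i + j ≤ 2 → bidegreeCoeff q i j = 0 := fun i j hij =>
    bidegreeCoeff_eq_zero_of_iteratedFDeriv_eq_zero hq
      (iteratedFDeriv_comp_sub_eq_zero _ hF.contDiffAt hG.contDiffAt (hjet _ hij))
  obtain ⟨hp0, hq0⟩ := bidegreeCoeff_eq_zero_of_mapsTo_leviGraph hB hBsep hvanish
    hG.differentiableAt hG0 hGsurj hFM hGM hp hq hp2 hq2
  filter_upwards [eventually_eq_zero_of_bidegreeCoeff_eq_zero hp hp0,
    eventually_eq_zero_of_bidegreeCoeff_eq_zero hq hq0] with x hfst hsnd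
  exact sub_eq_zero.1 (Prod.ext hfst hsnd)

end LeviGraphMaps

section HermitianMatrix

open scoped Topology ComplexConjugate ComplexOrder

variable {ι : Type*} [Fintype ι] [DecidableEq ι] {A : Matrix ι ι ℂ}

/-- The sesquilinear form `(z, v) ↦ z̄ᵀ A v` on `ℂⁿ`, conjugate-linear in its first argument. -/
noncomputable def matrixSesquilinearForm (A : Matrix ι ι ℂ) :
    (ι → ℂ) →L⋆[ℂ] (ι → ℂ) →L[ℂ] ℂ :=
  (toBilin' A).toContinuousBilinearMap.comp
    (starL ℂ : (ι → ℂ) ≃L⋆[ℂ] (ι → ℂ)).toContinuousLinearMap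

theorem matrixSesquilinearForm_apply (A : Matrix ι ι ℂ) (z v : ι → ℂ) :
    matrixSesquilinearForm A z v = star z ⬝ᵥ A *ᵥ v :=
  toBilin'_apply' A (star z) v

theorem isSymm_matrixSesquilinearForm (hA : A.IsHermitian) :
    (matrixSesquilinearForm A).toLinearMap₁₂.IsSymm where
  eq z v := by
    change conj (matrixSesquilinearForm A z v) = matrixSesquilinearForm A v z
    rw [matrixSesquilinearForm_apply, matrixSesquilinearForm_apply, starRingEnd_apply,
      ← star_dotProduct_star, star_star, star_mulVec, hA.eq, dotProduct_mulVec, dotProduct_comm]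

theorem separatingRight_matrixSesquilinearForm (hA : IsUnit A) :
    (matrixSesquilinearForm A).toLinearMap₁₂.SeparatingRight := fun v hv => by
  have hzero : A *ᵥ v = 0 := dotProduct_star_self_eq_zero.1
    ((matrixSesquilinearForm_apply A _ v).symm.trans (hv (A *ᵥ v)))
  exact mulVec_injective_of_isUnit hA (hzero.trans (mulVec_zero A).symm)

theorem eventually_mem_leviGraph_of_mapsTo {h : (ι → ℂ) × ℝ → ℝ} {V : Set ((ι → ℂ) × ℝ)}
    (hV : V ∈ 𝓝 0) {U : Set ((ι → ℂ) × ℂ)} (hU : U ∈ 𝓝 0) {K : (ι → ℂ) × ℂ → (ι → ℂ) × ℂ}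
    {M : Set ((ι → ℂ) × ℂ)}
    (hM : M = {p | (p.1, p.2.re) ∈ V ∧ p.2.im = (star p.1 ⬝ᵥ A *ᵥ p.1).re + h (p.1, p.2.re)})
    (hK : ∀ p ∈ M ∩ U, K p ∈ M) :
    ∀ᶠ p in 𝓝 0, p ∈ leviGraph (matrixSesquilinearForm A) h →
      K p ∈ leviGraph (matrixSesquilinearForm A) h := by
  have hcont : Continuous fun p : (ι → ℂ) × ℂ => (p.1, p.2.re) := by fun_prop
  filter_upwards [hU, hcont.continuousAt.preimage_mem_nhds hV] with p hpU hpV hp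
  simp only [hM, mem_leviGraph, matrixSesquilinearForm_apply] at hK hp ⊢
  exact (hK p ⟨⟨hpV, hp⟩, hpU⟩).2

end HermitianMatrix

/-- (Chern–Moser) Let `M = {Im w = z̄ᵀAz + h(z, Re w)}` be a real-analytic hypersurface
through `0` in `ℂ^N = ℂ^{N-1} × ℂ` with nondegenerate Levi form at `0` (`A` an invertible
Hermitian matrix, `h` real-analytic and vanishing to second order at `0`). Two local
biholomorphisms fixing `0` and preserving `M` with the same 2-jet at `0` coincide near `0`. -/
theorem chern_moser_finite_jet_determination
    (N : ℕ) (hN : 2 ≤ N)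
    (A : Matrix (Fin (N - 1)) (Fin (N - 1)) ℂ) (hA : A.IsHermitian) (hAinv : IsUnit A)
    (V : Set ((Fin (N - 1) → ℂ) × ℝ)) (hVo : IsOpen V)
    (hV0 : (0 : (Fin (N - 1) → ℂ) × ℝ) ∈ V)
    (h : (Fin (N - 1) → ℂ) × ℝ → ℝ)
    (hra : AnalyticOnNhd ℝ h V) (h0 : h 0 = 0)
    (h1 : iteratedFDeriv ℝ 1 h 0 = 0) (h2 : iteratedFDeriv ℝ 2 h 0 = 0)
    (M : Set ((Fin (N - 1) → ℂ) × ℂ))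
    (hM : M = {p | (p.1, p.2.re) ∈ V ∧
      p.2.im = (star p.1 ⬝ᵥ A.mulVec p.1).re + h (p.1, p.2.re)})
    (U : Set ((Fin (N - 1) → ℂ) × ℂ)) (hUo : IsOpen U)
    (hU0 : (0 : (Fin (N - 1) → ℂ) × ℂ) ∈ U)
    (F G : (Fin (N - 1) → ℂ) × ℂ → (Fin (N - 1) → ℂ) × ℂ)
    (hFh : DifferentiableOn ℂ F U) (hGh : DifferentiableOn ℂ G U)
    (hF0 : F 0 = 0) (hG0 : G 0 = 0)
    (hFd : IsUnit (fderiv ℂ F 0)) (hGd : IsUnit (fderiv ℂ G 0))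
    (hFM : ∀ p ∈ M ∩ U, F p ∈ M) (hGM : ∀ p ∈ M ∩ U, G p ∈ M)
    (hjet : ∀ k ≤ 2, iteratedFDeriv ℂ k F 0 = iteratedFDeriv ℂ k G 0) :
    F =ᶠ[nhds 0] G := by
  have hU : U ∈ nhds 0 := hUo.mem_nhds hU0
  have hV : V ∈ nhds 0 := hVo.mem_nhds hV0
  have : Nonempty (Fin (N - 1)) := ⟨⟨0, by lia⟩⟩
  exact chern_moser_finite_jet_determination_general (isSymm_matrixSesquilinearForm hA)
    (separatingRight_matrixSesquilinearForm hAinv) (hra 0 hV0).contDiffAt h0 h1 h2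
    (analyticAt_of_differentiableOn hFh hU) (analyticAt_of_differentiableOn hGh hU) hG0
    (ContinuousLinearMap.isUnit_iff_bijective.1 hGd).2
    (eventually_mem_leviGraph_of_mapsTo hV hU hM hFM)
    (eventually_mem_leviGraph_of_mapsTo hV hU hM hGM) hjet
end
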